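/- Under the single-pinning measure μ^{ε_xδ_x} with ε_x>0 and with the degenerate weight vector π_xδ_x (value π_x>0 at x, zero elsewhere), the observable O^{π_xδ_x}_xy equals e^{t_y}/π_x almost surely, and E_{μ^{ε_xδ_x}}[O^{π_xδ_x}_xy] = 1/π_x. -/

import Mathlib

/-!
Under the single pinning at `x`, a spanning tree containing a root edge other than `x ∼ ρ` has
weight zero. On the remaining trees `x ∼ ρ` is the only root edge, so removing `ρ` keeps every
vertex connected to `x` (`root_connIn`) and the observable is exactly `e^(t_y) / π_x` (`dens_obs`).
It remains to prove that `e^(t_y)` has expectation one (`lintegral_dens`), for which neither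
supersymmetry nor the normalisation of the measure is presupposed.

* The sum over trees is a determinant `det M(t)`, by the matrix-tree theorem `sum_STrees`: expanding
  the determinant along all rows gives a sum over parent maps `f : V → Option V`, and only those
  leading every vertex to the root contribute; these correspond to spanning trees.
* The Gibbs factor is a Gaussian in `s` with the same matrix `M(t)`, times a function of `t`
  (`prod_gibbs`); integrating out `s` gives `(det M(t))^(-1/2)`.
* Put `η = ε_x δ_x` and `a_i(t) = ∑ j, W_ij e^(t_j - t_i) + η_i e^(-t_i)`. Then
  `M(t) = diag(e^t) H diag(e^t)` with `H = diag(a(t)) - W`, and `H e^t = η`. Hence `t ↦ a(t)` is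
  injective, its Jacobian is `det H` up to sign, and by the strong maximum principle `schr_pos` its
  range is the set of all `a` for which `H` is positive definite. In the variable `a` the expectation
  becomes `(2π)^(-|V|/2)` times the integral of `(H⁻¹ η)_y Phi(a)` (`lintegral_pot`), where
  `Phi(a) = exp(-⟨1,H1⟩/2 - ⟨η,H⁻¹η⟩/2 + ⟨η,1⟩) / √(det H)`.
* Singling out one vertex by a Schur complement factorises `Phi` into the same density on the other
  vertices, with another source, and a one-dimensional density `igDens c` in the Schur complement
  (`Phi_sum`). The latter has mass `√(2π)` for every `c ≥ 0`, so `Phi` has mass `(2π)^(|V|/2)` by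
  induction. Choosing `y` as the vertex singled out first, `(H⁻¹ η)_y` is `c / z`, with `z` the
  Schur complement, and the substitution `z ↦ c² / z` shows that this factor does not change the
  one-dimensional integral (`lintegral_igDens_tilt`).
-/

open MeasureTheory Real Filter
open scoped BigOperators

attribute [local instance] Classical.propDecidable

namespace H22

variable {V : Type*} [Fintype V] [DecidableEq V]

/-- The augmented graph `Γ_ρ`: add an extra vertex `ρ` (encoded by `none`)
joined to every vertex of the original graph. -/
def aug (G : SimpleGraph V) : SimpleGraph (Option V) :=
  SimpleGraph.fromRel (fun a b =>
    match a, b with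
    | some i, some j => G.Adj i j
    | _, _ => True)

/-- `T` is (the edge set of) a spanning tree of `G`. -/
def IsSpanningTree {α : Type*} (G : SimpleGraph α) (T : Finset (Sym2 α)) : Prop :=
  ↑T ⊆ G.edgeSet ∧ (SimpleGraph.fromEdgeSet (↑T : Set (Sym2 α))).IsTree

/-- The finset of all spanning trees of `G`. -/
noncomputable def STrees {α : Type*} [Fintype α] [DecidableEq α] (G : SimpleGraph α) :
    Finset (Finset (Sym2 α)) :=
  Finset.univ.filter (fun T => IsSpanningTree G T)

/-- Extension of a vector `t : V → ℝ` to `Option V` by `t_ρ := 0`. -/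
def extV (t : V → ℝ) : Option V → ℝ := fun a => Option.elim a 0 t

/-- Lift of a (symmetrized) function of two vertices to unordered pairs. -/
noncomputable def esym {α : Type*} (f : α → α → ℝ) : Sym2 α → ℝ :=
  Sym2.lift ⟨fun a b => (f a b + f b a) / 2, fun a b => by ring⟩

/-- Combined edge weights on the augmented graph: `β` on edges of `Γ`,
`ε_i` on the edge `i ∼ ρ`. -/
def bres (β : V → V → ℝ) (ε : V → ℝ) : Option V → Option V → ℝ := fun a b =>
  match a, b with
  | some i, some j => β i j
  | some i, none => ε i
  | none, some j => ε j
  | none, none => 0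

/-- `B_{ij}(t,s) = cosh(t_i - t_j) + ½ (s_i - s_j)² e^{t_i+t_j}` on the augmented graph. -/
noncomputable def Bfun (t s : V → ℝ) (a b : Option V) : ℝ :=
  Real.cosh (extV t a - extV t b) +
    (1 / 2) * (extV s a - extV s b) ^ 2 * Real.exp (extV t a + extV t b)

/-- Weight `β_{ij} e^{t_i+t_j}` of an edge of the augmented graph. -/
noncomputable def treeW (β : V → V → ℝ) (ε : V → ℝ) (t : V → ℝ) : Sym2 (Option V) → ℝ :=
  esym (fun a b => bres β ε a b * Real.exp (extV t a + extV t b))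

/-- Gibbs factor `e^{-β_{ij}(B_{ij}(t,s)-1)}` of an edge of the augmented graph. -/
noncomputable def gibbs (β : V → V → ℝ) (ε : V → ℝ) (t s : V → ℝ) : Sym2 (Option V) → ℝ :=
  esym (fun a b => Real.exp (-(bres β ε a b * (Bfun t s a b - 1))))

/-- The density of the measure `μ^ε` with respect to
(Lebesgue on `ℝ^V × ℝ^V`) × (counting measure on spanning trees). -/
noncomputable def dens (G : SimpleGraph V) (β : V → V → ℝ) (ε : V → ℝ)
    (t s : V → ℝ) (T : Finset (Sym2 (Option V))) : ℝ :=
  (∏ j, Real.exp (-t j) / (2 * Real.pi)) *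
  (∏ e ∈ Finset.univ.filter (fun e : Sym2 (Option V) => e ∈ (aug G).edgeSet),
      gibbs β ε t s e) *
  (∏ e ∈ T, treeW β ε t e)

/-- Expectation of an observable `f(t,s,T)` under the measure `μ^ε`. -/
noncomputable def expect (G : SimpleGraph V) (β : V → V → ℝ) (ε : V → ℝ)
    (f : (V → ℝ) → (V → ℝ) → Finset (Sym2 (Option V)) → ℝ) : ℝ :=
  ∑ T ∈ STrees (aug G), ∫ p : (V → ℝ) × (V → ℝ), dens G β ε p.1 p.2 T * f p.1 p.2 T

/-- The weighted graph Laplacian `A(t)` of `Γ`. -/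
noncomputable def Amat (G : SimpleGraph V) (β : V → V → ℝ) (t : V → ℝ) : Matrix V V ℝ :=
  Matrix.of fun i j =>
    if i = j then ∑ k ∈ Finset.univ.filter (fun k => G.Adj k j), β k j * Real.exp (t k + t j)
    else if G.Adj i j then -(β i j * Real.exp (t i + t j)) else 0

/-- The pinning diagonal matrix `ε̂(t) = diag(ε_i e^{t_i})`. -/
noncomputable def epsHat (ε : V → ℝ) (t : V → ℝ) : Matrix V V ℝ :=
  Matrix.diagonal fun i => ε i * Real.exp (t i)

/-- The Green's function `G^ε_{xy} = e^{t_x+t_y} (A(t)+ε̂(t))⁻¹_{xy}`. -/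
noncomputable def Gfun (G : SimpleGraph V) (β : V → V → ℝ) (ε : V → ℝ)
    (t : V → ℝ) (x y : V) : ℝ :=
  Real.exp (t x + t y) * (Amat G β t + epsHat ε t)⁻¹ x y

/-- The edge `i ∼ ρ` of the augmented graph. -/
def rootEdge (i : V) : Sym2 (Option V) := s(some i, none)

/-- The set of roots `R(T) = {i ∈ V : (i ∼ ρ) ∈ T}`. -/
noncomputable def roots (T : Finset (Sym2 (Option V))) : Finset V :=
  Finset.univ.filter fun i => rootEdge i ∈ T

/-- The forest `F(T) = T ∩ E`: edges of `T` not incident to `ρ`. -/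
noncomputable def forestOf (T : Finset (Sym2 (Option V))) : Finset (Sym2 (Option V)) :=
  T.filter fun e => ¬ ((none : Option V) ∈ e)

/-- `x ↔_T y`: `x` and `y` are connected in `T` through a path not using `ρ`. -/
def connIn (T : Finset (Sym2 (Option V))) (x y : V) : Prop :=
  (SimpleGraph.fromEdgeSet (↑(forestOf T) : Set (Sym2 (Option V)))).Reachable (some x) (some y)

/-- The observable `O^π_{xy}`. -/
noncomputable def obs (pv : V → ℝ) (x y : V) (t : V → ℝ)
    (T : Finset (Sym2 (Option V))) : ℝ :=
  Real.exp (t x + t y) / (pv x * Real.exp (t x) + pv y * Real.exp (t y)) *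
    (if rootEdge x ∈ T ∧ connIn T x y then 1 else 0)

/-- The pinning `ε = (π_i ε)_{i ∈ V}`. -/
def pinOf (pv : V → ℝ) (ε : ℝ) : V → ℝ := fun i => pv i * ε

/-- The pinning `c δ_x` concentrated at the single vertex `x`. -/
def singlePin (x : V) (c : ℝ) : V → ℝ := fun i => if i = x then c else 0

/-! ### One-dimensional integrals -/

lemma lintegral_gauss :
    ∫⁻ w : ℝ, ENNReal.ofReal (Real.exp (-(w ^ 2) / 2)) = ENNReal.ofReal √(2 * π) := by
  have h1 : Integrable (fun w : ℝ => Real.exp (-(w ^ 2) / 2)) := by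
    have := integrable_exp_neg_mul_sq (b := 1 / 2) (by norm_num)
    refine this.congr (Eventually.of_forall fun w => ?_)
    simp only
    ring_nf
  rw [← ofReal_integral_eq_lintegral_ofReal h1 (Eventually.of_forall fun w => (Real.exp_pos _).le)]
  have := integral_gaussian (1 / 2)
  rw [show π / (1 / 2) = 2 * π by ring] at this
  rw [← this]
  congr 2
  ext w
  ring_nf

/-- The density of the last Schur variable `y`, before normalisation: completing the square,
it is the exponential of `-(√y - c / √y) ^ 2 / 2`, divided by `√y`. -/
noncomputable def igDens (c y : ℝ) : ℝ :=
  Real.exp (-y / 2 - c ^ 2 / (2 * y) + c) / √y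

lemma igDens_nonneg (c y : ℝ) : 0 ≤ igDens c y := by
  unfold igDens; positivity

lemma igDens_measurable (c : ℝ) : Measurable (igDens c) := by
  unfold igDens; fun_prop

/-- Substituting `w = √y - c / √y` turns the integral into a Gaussian one. -/
lemma lintegral_igDens_add {c : ℝ} (hc : 0 < c) :
    ∫⁻ y in Set.Ioi (0 : ℝ), ENNReal.ofReal ((1 + c / y) * igDens c y) =
      2 * ENNReal.ofReal √(2 * π) := by
  set h : ℝ → ℝ := fun y => √y - c / √y with hh
  set h' : ℝ → ℝ := fun y => 1 / (2 * √y) + c / (2 * y * √y) with hh'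
  have hder : ∀ y ∈ Set.Ioi (0 : ℝ), HasDerivWithinAt h (h' y) (Set.Ioi 0) y := by
    intro y hy
    have hy : 0 < y := hy
    have hs : 0 < √y := Real.sqrt_pos.2 hy
    have h1 := Real.hasDerivAt_sqrt hy.ne'
    have h2 := h1.sub ((hasDerivAt_const y c).div h1 hs.ne')
    refine (h2.congr_deriv ?_).hasDerivWithinAt
    have : y = √y ^ 2 := (Real.sq_sqrt hy.le).symm
    simp only [hh']
    rw [show c / (2 * y * √y) = c / (2 * √y ^ 2 * √y) by rw [← this]]
    field_simp
    ring
  have hmono : StrictMonoOn h (Set.Ioi 0) := by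
    intro a ha b hb hab
    have ha : 0 < a := ha
    have hs := Real.sqrt_lt_sqrt ha.le hab
    have hsa : 0 < √a := Real.sqrt_pos.2 ha
    have : c / √b < c / √a := div_lt_div_of_pos_left hc hsa hs
    simp only [hh]
    linarith
  have himg : h '' Set.Ioi 0 = Set.univ := by
    refine Set.eq_univ_of_forall fun w => ?_
    -- the positive root `z` of `z ^ 2 - w z - c = 0`
    set z := (w + √(w ^ 2 + 4 * c)) / 2 with hz
    have hq : √(w ^ 2 + 4 * c) ^ 2 = w ^ 2 + 4 * c := Real.sq_sqrt (by positivity)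
    have hlt : |w| < √(w ^ 2 + 4 * c) := by
      rw [← Real.sqrt_sq_eq_abs]
      exact Real.sqrt_lt_sqrt (by positivity) (by linarith)
    have hzpos : 0 < z := by
      have := neg_abs_le w
      rw [hz]; linarith
    refine ⟨z ^ 2, by simpa using pow_pos hzpos 2, ?_⟩
    simp only [hh, Real.sqrt_sq hzpos.le]
    field_simp
    rw [hz]
    nlinarith
  have key := lintegral_image_eq_lintegral_abs_deriv_mul measurableSet_Ioi hder hmono.injOn
    (fun w => 2 * ENNReal.ofReal (Real.exp (-(w ^ 2) / 2)))
  rw [himg, Measure.restrict_univ, lintegral_const_mul _ (by fun_prop), lintegral_gauss] at key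
  rw [key]
  refine setLIntegral_congr_fun measurableSet_Ioi fun y hy => ?_
  have hy : 0 < y := hy
  have hs : 0 < √y := Real.sqrt_pos.2 hy
  have e2 : (2 : ENNReal) = ENNReal.ofReal 2 := by simp
  rw [e2, ← ENNReal.ofReal_mul (by norm_num), ← ENNReal.ofReal_mul (abs_nonneg _)]
  have hpos : 0 ≤ h' y := by simp only [hh']; positivity
  rw [abs_of_nonneg hpos]
  congr 1
  have hsq : h y ^ 2 = y - 2 * c + c ^ 2 / y := by
    simp only [hh]
    have : √y ^ 2 = y := Real.sq_sqrt hy.le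
    rw [sub_sq, div_pow, this]
    field_simp
  rw [hsq, igDens, show -(y - 2 * c + c ^ 2 / y) / 2 = -y / 2 - c ^ 2 / (2 * y) + c by
    field_simp; ring]
  simp only [hh']
  field_simp

/-- The two halves of the previous integral agree, by the substitution `y ↦ c ^ 2 / y`. -/
lemma lintegral_igDens_symm {c : ℝ} (hc : 0 < c) :
    ∫⁻ y in Set.Ioi (0 : ℝ), ENNReal.ofReal (igDens c y) =
      ∫⁻ y in Set.Ioi (0 : ℝ), ENNReal.ofReal (c / y * igDens c y) := by
  set h : ℝ → ℝ := fun y => c ^ 2 / y with hh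
  have hder : ∀ y ∈ Set.Ioi (0 : ℝ), HasDerivWithinAt h (-(c ^ 2) / y ^ 2) (Set.Ioi 0) y := by
    intro y hy
    have hy : 0 < y := hy
    have h2 := (hasDerivAt_const y (c ^ 2)).div (hasDerivAt_id y) hy.ne'
    refine (h2.congr_deriv ?_).hasDerivWithinAt
    simp
  have hinj : Set.InjOn h (Set.Ioi 0) := by
    intro a ha b hb hab
    have ha : 0 < a := ha
    have hb : 0 < b := hb
    simp only [hh] at hab
    rw [div_eq_div_iff ha.ne' hb.ne'] at hab
    exact (mul_left_cancel₀ (pow_pos hc 2).ne' hab).symm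
  have himg : h '' Set.Ioi 0 = Set.Ioi 0 := by
    ext w
    constructor
    · rintro ⟨y, hy, rfl⟩
      have hy : 0 < y := hy
      simp only [hh, Set.mem_Ioi]; positivity
    · intro hw
      have hw : 0 < w := hw
      refine ⟨c ^ 2 / w, by simp only [Set.mem_Ioi]; positivity, ?_⟩
      simp only [hh]
      field_simp
  have key := lintegral_image_eq_lintegral_abs_deriv_mul measurableSet_Ioi hder hinj
    (fun y => ENNReal.ofReal (igDens c y))
  rw [himg] at key
  rw [key]
  refine setLIntegral_congr_fun measurableSet_Ioi fun y hy => ?_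
  have hy : 0 < y := hy
  have hs : 0 < √y := Real.sqrt_pos.2 hy
  rw [← ENNReal.ofReal_mul (abs_nonneg _)]
  congr 1
  have hsq : √y ^ 2 = y := Real.sq_sqrt hy.le
  have e1 : √(h y) = c / √y := by
    simp only [hh]
    rw [Real.sqrt_div (by positivity), Real.sqrt_sq hc.le]
  rw [igDens, igDens, e1, neg_div, abs_neg, abs_of_pos (by positivity)]
  simp only [hh]
  rw [show -(c ^ 2 / y) / 2 - c ^ 2 / (2 * (c ^ 2 / y)) + c = -y / 2 - c ^ 2 / (2 * y) + c by
    field_simp; ring]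
  have : c ^ 2 / y ^ 2 = c ^ 2 / (√y ^ 2 * y) := by rw [hsq]; ring
  rw [this]
  field_simp

lemma lintegral_igDens_zero :
    ∫⁻ y in Set.Ioi (0 : ℝ), ENNReal.ofReal (igDens 0 y) = ENNReal.ofReal √(2 * π) := by
  have hder : ∀ y ∈ Set.Ioi (0 : ℝ),
      HasDerivWithinAt Real.sqrt (1 / (2 * √y)) (Set.Ioi 0) y := fun y hy =>
    (Real.hasDerivAt_sqrt (ne_of_gt hy)).hasDerivWithinAt
  have hinj : Set.InjOn Real.sqrt (Set.Ioi 0) := fun a ha b hb hab =>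
    (Real.sqrt_inj (le_of_lt ha) (le_of_lt hb)).1 hab
  have himg : Real.sqrt '' Set.Ioi 0 = Set.Ioi 0 := by
    ext w
    constructor
    · rintro ⟨y, hy, rfl⟩
      exact Real.sqrt_pos.2 hy
    · intro hw
      exact ⟨w ^ 2, pow_pos (show 0 < w from hw) 2, Real.sqrt_sq (le_of_lt hw)⟩
  have key := lintegral_image_eq_lintegral_abs_deriv_mul measurableSet_Ioi hder hinj
    (fun w => ENNReal.ofReal (2 * Real.exp (-(1 / 2) * w ^ 2)))
  rw [himg] at key
  have hI : IntegrableOn (fun w : ℝ => 2 * Real.exp (-(1 / 2) * w ^ 2)) (Set.Ioi 0) :=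
    ((integrable_exp_neg_mul_sq (by norm_num)).const_mul _).integrableOn
  rw [← ofReal_integral_eq_lintegral_ofReal hI
    (Eventually.of_forall fun w => by positivity), integral_const_mul, integral_gaussian_Ioi] at key
  rw [show 2 * (√(π / (1 / 2)) / 2) = √(2 * π) by
    rw [show π / (1 / 2) = 2 * π by ring]; ring] at key
  rw [key]
  refine setLIntegral_congr_fun measurableSet_Ioi fun y hy => ?_
  have hy : 0 < y := hy
  have hs : 0 < √y := Real.sqrt_pos.2 hy
  rw [← ENNReal.ofReal_mul (abs_nonneg _), abs_of_pos (by positivity), igDens, Real.sq_sqrt hy.le]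
  congr 1
  rw [show -y / 2 - 0 ^ 2 / (2 * y) + 0 = -(1 / 2) * y by ring]
  field_simp

/-- The weight `c / y` does not change the mass of `igDens c`; this is why tilting by one coordinate
of `H⁻¹ η` leaves the total mass of the potential unchanged. -/
lemma lintegral_igDens_tilt {c : ℝ} (hc : 0 < c) :
    ∫⁻ y in Set.Ioi (0 : ℝ), ENNReal.ofReal (c / y * igDens c y) = ENNReal.ofReal √(2 * π) := by
  have h1 := lintegral_igDens_add hc
  have h2 := lintegral_igDens_symm hc
  have h3 : ∫⁻ y in Set.Ioi (0 : ℝ), ENNReal.ofReal ((1 + c / y) * igDens c y) =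
      (∫⁻ y in Set.Ioi (0 : ℝ), ENNReal.ofReal (igDens c y)) +
      ∫⁻ y in Set.Ioi (0 : ℝ), ENNReal.ofReal (c / y * igDens c y) := by
    rw [← lintegral_add_left (igDens_measurable c).ennreal_ofReal]
    refine setLIntegral_congr_fun measurableSet_Ioi fun y hy => ?_
    have hy : 0 < y := hy
    have := igDens_nonneg c y
    rw [← ENNReal.ofReal_add this (by positivity)]
    congr 1; ring
  rw [h1, h2, ← two_mul] at h3
  exact ((ENNReal.mul_right_inj (by norm_num) (by norm_num)).1 h3).symm

lemma lintegral_igDens {c : ℝ} (hc : 0 ≤ c) :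
    ∫⁻ y in Set.Ioi (0 : ℝ), ENNReal.ofReal (igDens c y) = ENNReal.ofReal √(2 * π) := by
  rcases hc.eq_or_lt with rfl | hc
  · exact lintegral_igDens_zero
  · rw [lintegral_igDens_symm hc, lintegral_igDens_tilt hc]

/-! ### Gaussian integral in finite dimension -/

lemma lintegral_pi_gauss {V : Type*} [Fintype V] :
    ∫⁻ v : V → ℝ, ENNReal.ofReal (Real.exp (-(∑ i, v i ^ 2) / 2)) =
      ENNReal.ofReal (√(2 * π) ^ Fintype.card V) := by
  have e : ∀ v : V → ℝ, Real.exp (-(∑ i, v i ^ 2) / 2) = ∏ i, Real.exp (-(1 / 2) * v i ^ 2) := by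
    intro v
    rw [← Real.exp_sum, ← Finset.mul_sum]
    congr 1; ring
  simp_rw [e]
  rw [← ofReal_integral_eq_lintegral_ofReal
    (μ := volume) (Integrable.fintype_prod (f := fun (_ : V) (x : ℝ) => Real.exp (-(1 / 2) * x ^ 2))
      fun _ => integrable_exp_neg_mul_sq (by norm_num))
    (Eventually.of_forall fun v => by positivity)]
  rw [integral_fintype_prod_volume_eq_prod (fun (_ : V) (x : ℝ) => Real.exp (-(1 / 2) * x ^ 2)),
    Finset.prod_const, integral_gaussian, show π / (1 / 2) = 2 * π by ring]
  rfl

open scoped MatrixOrder Matrix.Norms.L2Operator in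
lemma lintegral_gauss_posDef {V : Type*} [Fintype V] [DecidableEq V]
    {M : Matrix V V ℝ} (hM : M.PosDef) :
    ∫⁻ v : V → ℝ, ENNReal.ofReal (Real.exp (-(v ⬝ᵥ M.mulVec v) / 2)) =
      ENNReal.ofReal (√(2 * π) ^ Fintype.card V / √M.det) := by
  obtain ⟨B, hB⟩ := CStarAlgebra.nonneg_iff_eq_star_mul_self.1 hM.posSemidef.nonneg
  rw [Matrix.star_eq_conjTranspose, Matrix.conjTranspose_eq_transpose_of_trivial] at hB
  have hdet : M.det = B.det ^ 2 := by
    rw [hB, Matrix.det_mul, Matrix.det_transpose, sq]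
  have hB0 : B.det ≠ 0 := by
    intro h
    have := hM.det_pos
    rw [hdet, h] at this
    simp at this
  have hq : ∀ v : V → ℝ, v ⬝ᵥ M.mulVec v = ∑ i, (Matrix.toLin' B v) i ^ 2 := by
    intro v
    rw [hB, ← Matrix.mulVec_mulVec, Matrix.dotProduct_mulVec, Matrix.vecMul_transpose]
    simp [dotProduct, sq]
  have hmeas : Measurable (Matrix.toLin' B : (V → ℝ) → V → ℝ) :=
    (LinearMap.continuous_on_pi _).measurable
  have key := lintegral_map (μ := (volume : Measure (V → ℝ)))
    (f := fun v : V → ℝ => ENNReal.ofReal (Real.exp (-(∑ i, v i ^ 2) / 2)))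
    (by fun_prop) hmeas
  simp_rw [hq]
  rw [← key, Real.map_matrix_volume_pi_eq_smul_volume_pi hB0, lintegral_smul_measure,
    lintegral_pi_gauss, smul_eq_mul, ← ENNReal.ofReal_mul (abs_nonneg _), hdet,
    Real.sqrt_sq_eq_abs, abs_inv]
  congr 1
  field_simp

/-! ### Schrödinger matrices -/

/-- The Schrödinger-type matrix `diag(a) - W`. -/
def schr {V : Type*} [DecidableEq V] (W : Matrix V V ℝ) (a : V → ℝ) : Matrix V V ℝ :=
  Matrix.diagonal a - W

lemma posDef_pos {V : Type*} [Fintype V] {M : Matrix V V ℝ} (hM : M.PosDef) {v : V → ℝ}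
    (hv : v ≠ 0) : 0 < v ⬝ᵥ M.mulVec v := by
  simpa using hM.dotProduct_mulVec_pos hv

/-- Maximum principle: testing against the negative part shows that the solution of `H f = η`
is nonnegative. -/
lemma schr_nonneg {V : Type*} [Fintype V] [DecidableEq V] {W : Matrix V V ℝ}
    (hW : ∀ i j, 0 ≤ W i j) {a : V → ℝ} (hH : (schr W a).PosDef) {f : V → ℝ}
    (hf : ∀ i, 0 ≤ (schr W a).mulVec f i) (i : V) : 0 ≤ f i := by
  set g : V → ℝ := fun i => max (-f i) 0 with hg
  have hle : g ⬝ᵥ (schr W a).mulVec g ≤ -(g ⬝ᵥ (schr W a).mulVec f) := by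
    rw [← dotProduct_neg, ← Matrix.mulVec_neg, ← sub_nonneg, ← dotProduct_sub,
      ← Matrix.mulVec_sub]
    simp only [dotProduct, Matrix.mulVec, Finset.mul_sum]
    refine Finset.sum_nonneg fun i _ => Finset.sum_nonneg fun j _ => ?_
    simp only [schr, Matrix.sub_apply, Pi.sub_apply, Pi.neg_apply, hg]
    rcases eq_or_ne i j with rfl | hij
    · rcases le_total (-f i) 0 with h | h
      · simp [max_eq_right h]
      · simp [max_eq_left h]
    · rw [Matrix.diagonal_apply_ne _ hij]
      have h1 : -f j - max (-f j) 0 ≤ 0 := sub_nonpos.2 (le_max_left _ _)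
      have h2 : 0 ≤ max (-f i) 0 := le_max_right _ _
      have h3 := hW i j
      nlinarith [mul_nonneg h2 (mul_nonneg h3 (neg_nonneg.2 h1))]
  have hge : 0 ≤ g ⬝ᵥ (schr W a).mulVec f :=
    Finset.sum_nonneg fun i _ => mul_nonneg (le_max_right _ _) (hf i)
  by_cases h0 : g = 0
  · have := congrFun h0 i
    simp only [hg, Pi.zero_apply] at this
    have := le_max_left (-f i) 0
    linarith
  · have := posDef_pos hH h0
    linarith

lemma posDef_mulVec_inv {V : Type*} [Fintype V] [DecidableEq V] {M : Matrix V V ℝ}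
    (hM : M.PosDef) (η : V → ℝ) : M.mulVec (M⁻¹.mulVec η) = η := by
  rw [Matrix.mulVec_mulVec, Matrix.mul_nonsing_inv _ ((Matrix.isUnit_iff_isUnit_det _).1 hM.isUnit),
    Matrix.one_mulVec]

lemma posDef_inv_mulVec {V : Type*} [Fintype V] [DecidableEq V] {M : Matrix V V ℝ}
    (hM : M.PosDef) (f : V → ℝ) : M⁻¹.mulVec (M.mulVec f) = f := by
  rw [Matrix.mulVec_mulVec, Matrix.nonsing_inv_mul _ ((Matrix.isUnit_iff_isUnit_det _).1 hM.isUnit),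
    Matrix.one_mulVec]

lemma schr_mulVec {V : Type*} [Fintype V] [DecidableEq V] (W : Matrix V V ℝ) (a f : V → ℝ)
    (i : V) : (schr W a).mulVec f i = a i * f i - ∑ j, W i j * f j := by
  rw [schr, Matrix.sub_mulVec, Pi.sub_apply, Matrix.mulVec_diagonal]
  rfl

/-- Strong maximum principle: on a connected graph carrying positive weights, the solution of
`H f = η` with a nonnegative source that does not vanish at `x` is positive. -/
lemma schr_pos {V : Type*} [Fintype V] [DecidableEq V] {W : Matrix V V ℝ}
    (hW : ∀ i j, 0 ≤ W i j) {G : SimpleGraph V} (hG : G.Connected)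
    (hGW : ∀ i j, G.Adj i j → 0 < W i j) {a : V → ℝ} (hH : (schr W a).PosDef) {η : V → ℝ}
    (hη : ∀ i, 0 ≤ η i) {x : V} (hx : 0 < η x) (i : V) :
    0 < (schr W a)⁻¹.mulVec η i := by
  set f := (schr W a)⁻¹.mulVec η with hf
  have hHf : (schr W a).mulVec f = η := posDef_mulVec_inv hH η
  have hf0 : ∀ i, 0 ≤ f i := schr_nonneg hW hH (by rw [hHf]; exact hη)
  have hzero : ∀ i, f i = 0 → η i = 0 ∧ ∀ j, W i j * f j = 0 := by
    intro i hi
    have h := congrFun hHf i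
    rw [schr_mulVec, hi, mul_zero, zero_sub] at h
    have hs : 0 ≤ ∑ j, W i j * f j := Finset.sum_nonneg fun j _ => mul_nonneg (hW i j) (hf0 j)
    have h1 := hη i
    have hs0 : ∑ j, W i j * f j = 0 := by linarith
    refine ⟨by linarith, fun j => ?_⟩
    exact (Finset.sum_eq_zero_iff_of_nonneg fun j _ => mul_nonneg (hW i j) (hf0 j)).1 hs0 j
      (Finset.mem_univ j)
  by_contra hcon
  have hi : f i = 0 := le_antisymm (not_lt.1 hcon) (hf0 i)
  have hall : ∀ i j, f i = 0 → G.Reachable i j → f j = 0 := by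
    rintro i j hi ⟨p⟩
    induction p with
    | nil => exact hi
    | cons hadj _ ih =>
      refine ih ?_
      exact (mul_eq_zero.1 ((hzero _ hi).2 _)).resolve_left (hGW _ _ hadj).ne'
  have := (hzero x (hall i x hi (hG.preconnected i x))).1
  linarith

/-! ### Eliminating one vertex by a Schur complement -/

/-- The block matrix obtained from `A` by adjoining one vertex, with diagonal entry `δ` and
off-diagonal entries `-w`. -/
def blk {U : Type*} (A : Matrix U U ℝ) (w : U → ℝ) (δ : ℝ) : Matrix (U ⊕ Unit) (U ⊕ Unit) ℝ :=
  Matrix.fromBlocks A (Matrix.of fun u _ => -w u) (Matrix.of fun _ u => -w u)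
    (Matrix.of fun _ _ => δ)

section blk

variable {U : Type*} [Fintype U] [DecidableEq U] {A : Matrix U U ℝ} {w : U → ℝ} {δ : ℝ}

lemma blk_mulVec (f : U → ℝ) (g : ℝ) :
    (blk A w δ).mulVec (Sum.elim f fun _ => g) =
      Sum.elim (A.mulVec f - g • w) fun _ => δ * g - w ⬝ᵥ f := by
  ext (i | i)
  · simp [blk, Matrix.mulVec, dotProduct]
    ring
  · simp [blk, Matrix.mulVec, dotProduct]
    ring

lemma blk_det (hA : A.PosDef) : (blk A w δ).det = A.det * (δ - w ⬝ᵥ A⁻¹.mulVec w) := by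
  have := hA.isUnit.invertible
  rw [blk, Matrix.det_fromBlocks₁₁, Matrix.det_unique (n := Unit), Matrix.invOf_eq_nonsing_inv,
    Matrix.dotProduct_mulVec]
  simp [Matrix.mul_apply, Matrix.vecMul, dotProduct]

lemma blk_posDef_iff :
    (blk A w δ).PosDef ↔ A.PosDef ∧ 0 < δ - w ⬝ᵥ A⁻¹.mulVec w := by
  constructor
  · intro h
    have hA : A.PosDef := h.submatrix (e := (Sum.inl : U → U ⊕ Unit)) Sum.inl_injective
    refine ⟨hA, ?_⟩
    have h1 := h.det_pos
    rw [blk_det hA] at h1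
    exact (pos_iff_pos_of_mul_pos h1).1 hA.det_pos
  · rintro ⟨hA, hy⟩
    have hdet := blk_det (w := w) (δ := δ) hA
    have := hA.isUnit.invertible
    have hpsd : (blk A w δ).PosSemidef := by
      have := (Matrix.PosDef.fromBlocks₁₁ (Matrix.of fun u (_ : Unit) => -w u)
        (Matrix.of fun (_ : Unit) (_ : Unit) => δ) hA).2 (by
          have e : (Matrix.of fun (_ : Unit) (_ : Unit) => δ) -
              (Matrix.of fun u (_ : Unit) => -w u).conjTranspose * A⁻¹ *
                (Matrix.of fun u (_ : Unit) => -w u) =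
              Matrix.diagonal fun _ => δ - w ⬝ᵥ A⁻¹.mulVec w := by
            ext i j
            rw [Matrix.dotProduct_mulVec]
            simp [Matrix.mul_apply, Matrix.vecMul, dotProduct]
          rw [e]
          exact Matrix.PosSemidef.diagonal fun _ => hy.le)
      exact this
    exact hpsd.posDef_iff_det_ne_zero.2 (by rw [hdet]; exact (mul_pos hA.det_pos hy).ne')

lemma posDef_symm_dot (hA : A.PosDef) (f g : U → ℝ) : f ⬝ᵥ A⁻¹.mulVec g = g ⬝ᵥ A⁻¹.mulVec f := by
  have : A⁻¹.transpose = A⁻¹ := by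
    have := hA.inv.isHermitian
    rwa [Matrix.IsHermitian, Matrix.conjTranspose_eq_transpose_of_trivial] at this
  rw [Matrix.dotProduct_mulVec, ← Matrix.mulVec_transpose, this, dotProduct_comm]

lemma blk_inv_mulVec (h : (blk A w δ).PosDef) (η : U → ℝ) (e : ℝ) :
    (blk A w δ)⁻¹.mulVec (Sum.elim η fun _ => e) =
      Sum.elim
        (A⁻¹.mulVec (η + ((e + w ⬝ᵥ A⁻¹.mulVec η) / (δ - w ⬝ᵥ A⁻¹.mulVec w)) • w))
        fun _ => (e + w ⬝ᵥ A⁻¹.mulVec η) / (δ - w ⬝ᵥ A⁻¹.mulVec w) := by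
  obtain ⟨hA, hy⟩ := blk_posDef_iff.1 h
  rw [← posDef_inv_mulVec h (Sum.elim (A⁻¹.mulVec _) _), blk_mulVec, posDef_mulVec_inv hA]
  congr 1
  ext (i | i)
  · simp
  · simp only [Sum.elim_inr, Matrix.mulVec_add, Matrix.mulVec_smul, dotProduct_add,
      dotProduct_smul, smul_eq_mul]
    field_simp
    ring

end blk

/-- The density with respect to `da`, up to the factor `(2π)^(-|V|/2)`, of the random Schrödinger potential associated with the
`H^{2|2}` model: `exp(-⟨1,H1⟩/2 - ⟨η,H⁻¹η⟩/2 + ⟨η,1⟩) / √det H`, where `H = diag(a) - W`. -/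
noncomputable def Phi {V : Type*} [Fintype V] [DecidableEq V] (W : Matrix V V ℝ) (η a : V → ℝ) :
    ℝ :=
  Real.exp (-(1 ⬝ᵥ (schr W a).mulVec 1) / 2 - (η ⬝ᵥ (schr W a)⁻¹.mulVec η) / 2 + ∑ i, η i) /
    √(schr W a).det

/-- The potentials `a` for which `diag(a) - W` is positive definite. -/
def pdSet {V : Type*} [DecidableEq V] (W : Matrix V V ℝ) : Set (V → ℝ) :=
  {a | (schr W a).PosDef}

section meas

variable {V : Type*} [Fintype V] [DecidableEq V]

lemma continuous_schr (W : Matrix V V ℝ) : Continuous (schr W) := by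
  unfold schr
  fun_prop

lemma measurable_schr_inv (W : Matrix V V ℝ) (η : V → ℝ) :
    Measurable fun a => (schr W a)⁻¹.mulVec η := by
  refine measurable_pi_iff.2 fun i => ?_
  simp only [Matrix.inv_def, Ring.inverse_eq_inv', Matrix.smul_mulVec, Pi.smul_apply, smul_eq_mul]
  have h1 : Continuous fun a => (schr W a).det := (continuous_schr W).matrix_det
  have h2 : Continuous fun a => (schr W a).adjugate.mulVec η i :=
    (continuous_apply i).comp ((continuous_schr W).matrix_adjugate.matrix_mulVec continuous_const)
  exact h1.measurable.inv.mul h2.measurable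

lemma measurable_Phi (W : Matrix V V ℝ) (η : V → ℝ) : Measurable (Phi W η) := by
  have h1 : Continuous fun a => (schr W a).det := (continuous_schr W).matrix_det
  have h2 : Continuous fun a => (1 : V → ℝ) ⬝ᵥ (schr W a).mulVec 1 :=
    continuous_const.dotProduct ((continuous_schr W).matrix_mulVec continuous_const)
  have h3 : Measurable fun a => η ⬝ᵥ (schr W a)⁻¹.mulVec η := by
    simp only [dotProduct]
    exact Finset.measurable_sum _ fun i _ =>
      ((measurable_pi_iff.1 (measurable_schr_inv W η)) i).const_mul _
  unfold Phi
  exact ((((h2.measurable.neg.div_const 2).sub (h3.div_const 2)).add_const _).exp).div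
    h1.measurable.sqrt

/-- Positive semidefiniteness is a closed condition and positive definiteness adds `det ≠ 0`. -/
lemma measurableSet_pdSet {W : Matrix V V ℝ} (hW : W.IsSymm) : MeasurableSet (pdSet W) := by
  have hherm : ∀ a, (schr W a).IsHermitian := fun a => by
    rw [Matrix.IsHermitian, Matrix.conjTranspose_eq_transpose_of_trivial, schr,
      Matrix.transpose_sub, Matrix.diagonal_transpose, hW.eq]
  have e : pdSet W = {a | (schr W a).det ≠ 0} ∩
      ⋂ x : V → ℝ, {a | 0 ≤ x ⬝ᵥ (schr W a).mulVec x} := by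
    ext a
    simp only [pdSet, Set.mem_ofPred_eq, Set.mem_inter_iff, Set.mem_iInter]
    constructor
    · intro h
      exact ⟨h.det_pos.ne', fun x => by simpa using h.posSemidef.dotProduct_mulVec_nonneg x⟩
    · rintro ⟨h1, h2⟩
      exact (Matrix.PosSemidef.of_dotProduct_mulVec_nonneg (hherm a)
        (by simpa using h2)).posDef_iff_det_ne_zero.2 h1
  have h1 : Continuous fun a => (schr W a).det := (continuous_schr W).matrix_det
  rw [e]
  refine (h1.isOpen_preimage _ isOpen_ne).measurableSet.inter (IsClosed.measurableSet ?_)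
  refine isClosed_iInter fun x => isClosed_le continuous_const ?_
  exact continuous_const.dotProduct ((continuous_schr W).matrix_mulVec continuous_const)

end meas

section step

variable {U : Type*} [Fintype U] [DecidableEq U]

lemma schr_sum {W : Matrix (U ⊕ Unit) (U ⊕ Unit) ℝ} (hW : W.IsSymm) (a : U → ℝ) (α : ℝ) :
    schr W (Sum.elim a fun _ => α) =
      blk (schr W.toBlocks₁₁ a) (fun u => W (Sum.inl u) (Sum.inr ()))
        (α - W (Sum.inr ()) (Sum.inr ())) := by
  ext (i | i) (j | j)
  · simp [schr, blk, Matrix.diagonal_apply, Matrix.toBlocks₁₁]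
  · simp [schr, blk]
  · simp [schr, blk, hW.apply (Sum.inl j) (Sum.inr i)]
  · simp [schr, blk]

/-- Eliminating the last vertex factorises the density: the remaining vertices carry the same
kind of density with source `η + w`, and the Schur variable `y` has the density `igDens c`. -/
lemma Phi_sum {W : Matrix (U ⊕ Unit) (U ⊕ Unit) ℝ} (hW : W.IsSymm) (η : U ⊕ Unit → ℝ)
    {a : U → ℝ} (ha : a ∈ pdSet W.toBlocks₁₁) {y : ℝ} (hy : 0 < y) {w : U → ℝ}
    (hw : w = fun u => W (Sum.inl u) (Sum.inr ())) {G : Matrix U U ℝ}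
    (hGdef : G = (schr W.toBlocks₁₁ a)⁻¹) :
    Phi W η (Sum.elim a fun _ => y + W (Sum.inr ()) (Sum.inr ()) + w ⬝ᵥ G.mulVec w) =
      Phi W.toBlocks₁₁ (η ∘ Sum.inl + w) a *
        igDens (η (Sum.inr ()) + w ⬝ᵥ G.mulVec (η ∘ Sum.inl)) y := by
  have hA : (schr W.toBlocks₁₁ a).PosDef := ha
  set A := schr W.toBlocks₁₁ a with hAdef
  subst hGdef
  set c := η (Sum.inr ()) + w ⬝ᵥ A⁻¹.mulVec (η ∘ Sum.inl) with hc
  have hδ : y + W (Sum.inr ()) (Sum.inr ()) + w ⬝ᵥ A⁻¹.mulVec w - W (Sum.inr ()) (Sum.inr ()) =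
    y + w ⬝ᵥ A⁻¹.mulVec w := by ring
  have hH : schr W (Sum.elim a fun _ => y + W (Sum.inr ()) (Sum.inr ()) + w ⬝ᵥ A⁻¹.mulVec w) =
      blk A w (y + w ⬝ᵥ A⁻¹.mulVec w) := by
    rw [schr_sum hW, hδ, hw]
  have hpd : (blk A w (y + w ⬝ᵥ A⁻¹.mulVec w)).PosDef :=
    blk_posDef_iff.2 ⟨hA, by simpa using hy⟩
  have hη : η = Sum.elim (η ∘ Sum.inl) fun _ => η (Sum.inr ()) := by ext (i | i) <;> rfl
  have h1 : (1 : U ⊕ Unit → ℝ) = Sum.elim (1 : U → ℝ) fun _ => 1 := by ext (i | i) <;> rfl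
  have hinv : (blk A w (y + w ⬝ᵥ A⁻¹.mulVec w))⁻¹.mulVec η =
      Sum.elim (A⁻¹.mulVec (η ∘ Sum.inl + (c / y) • w)) fun _ => c / y := by
    conv_lhs => rw [hη]
    rw [blk_inv_mulVec hpd, add_sub_cancel_right]
  have hone : (1 : U ⊕ Unit → ℝ) ⬝ᵥ (blk A w (y + w ⬝ᵥ A⁻¹.mulVec w)).mulVec 1 =
      1 ⬝ᵥ A.mulVec 1 - 2 * ∑ u, w u + (y + w ⬝ᵥ A⁻¹.mulVec w) := by
    rw [h1, blk_mulVec, sumElim_dotProduct_sumElim]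
    simp [dotProduct_sub, dotProduct]
    ring
  have hsq : η ⬝ᵥ Sum.elim (A⁻¹.mulVec (η ∘ Sum.inl + (c / y) • w)) (fun _ : Unit => c / y) =
      (η ∘ Sum.inl) ⬝ᵥ A⁻¹.mulVec (η ∘ Sum.inl) + c ^ 2 / y := by
    conv_lhs => rw [hη]
    rw [sumElim_dotProduct_sumElim, Matrix.mulVec_add, Matrix.mulVec_smul, dotProduct_add,
      dotProduct_smul, posDef_symm_dot hA (η ∘ Sum.inl) w]
    have : w ⬝ᵥ A⁻¹.mulVec (η ∘ Sum.inl) = c - η (Sum.inr ()) := by rw [hc]; ring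
    rw [this]
    simp [dotProduct]
    ring
  rw [Phi, Phi, igDens, hH, hinv, hone, hsq, blk_det hA, add_sub_cancel_right,
    Real.sqrt_mul hA.det_pos.le, div_mul_div_comm, ← Real.exp_add, ← hAdef]
  congr 2
  have e1 : ∑ i, η i = ∑ u, η (Sum.inl u) + η (Sum.inr ()) := by simp
  have e2 : ∑ u, (η ∘ Sum.inl + w) u = ∑ u, η (Sum.inl u) + ∑ u, w u := by
    simp [Finset.sum_add_distrib]
  rw [e1, e2, Matrix.mulVec_add, dotProduct_add, add_dotProduct, add_dotProduct,
    posDef_symm_dot hA (η ∘ Sum.inl) w]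
  have : w ⬝ᵥ A⁻¹.mulVec (η ∘ Sum.inl) = c - η (Sum.inr ()) := by rw [hc]; ring
  rw [this]
  field_simp
  ring

end step

/-! ### Total mass of the random potential -/

section step

variable {U : Type*} [Fintype U] [DecidableEq U]

lemma lintegral_sum_unit {F : (U ⊕ Unit → ℝ) → ENNReal} (hF : Measurable F) :
    ∫⁻ a, F a = ∫⁻ a : U → ℝ, ∫⁻ α : ℝ, F (Sum.elim a fun _ => α) := by
  have h1 := (volume_measurePreserving_sumPiEquivProdPi_symm (fun _ : U ⊕ Unit => ℝ))
  have h2 := (volume_preserving_funUnique Unit ℝ).symm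
  have h3 := lintegral_prod (μ := volume) (ν := volume) _ (hF.comp h1.measurable).aemeasurable
  have h4 := h1.lintegral_comp hF
  rw [← h4, Measure.volume_eq_prod]
  refine h3.trans (lintegral_congr fun a => ?_)
  have h5 := h2.lintegral_comp ((hF.comp h1.measurable).comp (measurable_prodMk_left (x := a)))
  refine h5.symm.trans (lintegral_congr fun α => ?_)
  simp only [Function.comp]
  congr 1

lemma isSymm_toBlocks {W : Matrix (U ⊕ Unit) (U ⊕ Unit) ℝ} (hW : W.IsSymm) :
    W.toBlocks₁₁.IsSymm := by
  ext i j
  simp [Matrix.toBlocks₁₁, hW.apply]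

/-- Integrating out the diagonal entry at the last vertex. The value of `H⁻¹ η` there is `c / y`,
and `q` is a test function of this value. -/
lemma lintegral_Phi_sum {W : Matrix (U ⊕ Unit) (U ⊕ Unit) ℝ} (hW : W.IsSymm)
    (η : U ⊕ Unit → ℝ) {q : ℝ → ℝ} (hq : Measurable q) {w : U → ℝ}
    (hw : w = fun u => W (Sum.inl u) (Sum.inr ())) :
    ∫⁻ a in pdSet W, ENNReal.ofReal (q ((schr W a)⁻¹.mulVec η (Sum.inr ())) * Phi W η a) =
      ∫⁻ a in pdSet W.toBlocks₁₁, ENNReal.ofReal (Phi W.toBlocks₁₁ (η ∘ Sum.inl + w) a) *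
        ∫⁻ y in Set.Ioi (0 : ℝ), ENNReal.ofReal
          (q ((η (Sum.inr ()) + w ⬝ᵥ (schr W.toBlocks₁₁ a)⁻¹.mulVec (η ∘ Sum.inl)) / y) *
            igDens (η (Sum.inr ()) + w ⬝ᵥ (schr W.toBlocks₁₁ a)⁻¹.mulVec (η ∘ Sum.inl)) y) := by
  have hS := measurableSet_pdSet hW
  have hS' := measurableSet_pdSet (isSymm_toBlocks hW)
  have hm : Measurable fun a => ENNReal.ofReal
      (q ((schr W a)⁻¹.mulVec η (Sum.inr ())) * Phi W η a) :=
    ((hq.comp (measurable_pi_iff.1 (measurable_schr_inv W η) (Sum.inr ()))).mul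
      (measurable_Phi W η)).ennreal_ofReal
  rw [← lintegral_indicator hS, lintegral_sum_unit (hm.indicator hS), ← lintegral_indicator hS']
  refine lintegral_congr fun a => ?_
  by_cases ha : a ∈ pdSet W.toBlocks₁₁
  · -- substitute `α = y + W_vv + ⟨w, A⁻¹ w⟩`, where `y` is the Schur complement
    rw [Set.indicator_of_mem ha]
    have hA : (schr W.toBlocks₁₁ a).PosDef := ha
    set A := schr W.toBlocks₁₁ a with hAdef
    set c := η (Sum.inr ()) + w ⬝ᵥ A⁻¹.mulVec (η ∘ Sum.inl) with hc
    rw [← lintegral_const_mul' _ _ ENNReal.ofReal_ne_top, ← lintegral_indicator measurableSet_Ioi,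
      ← lintegral_add_right_eq_self _ (W (Sum.inr ()) (Sum.inr ()) + w ⬝ᵥ A⁻¹.mulVec w)]
    refine lintegral_congr fun y => ?_
    rw [← add_assoc]
    have hδ : y + W (Sum.inr ()) (Sum.inr ()) + w ⬝ᵥ A⁻¹.mulVec w -
      W (Sum.inr ()) (Sum.inr ()) = y + w ⬝ᵥ A⁻¹.mulVec w := by ring
    have hH : schr W (Sum.elim a fun _ => y + W (Sum.inr ()) (Sum.inr ()) +
        w ⬝ᵥ A⁻¹.mulVec w) = blk A w (y + w ⬝ᵥ A⁻¹.mulVec w) := by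
      rw [schr_sum hW, hδ, hw]
    have hiff : (Sum.elim a fun _ => y + W (Sum.inr ()) (Sum.inr ()) + w ⬝ᵥ A⁻¹.mulVec w) ∈
        pdSet W ↔ 0 < y := by
      change (schr W _).PosDef ↔ _
      rw [hH, blk_posDef_iff, add_sub_cancel_right]
      exact and_iff_right hA
    by_cases hy : 0 < y
    · rw [Set.indicator_of_mem (hiff.2 hy), Set.indicator_of_mem (show y ∈ Set.Ioi 0 from hy),
        hH]
      have hη : η = Sum.elim (η ∘ Sum.inl) fun _ => η (Sum.inr ()) := by ext (i | i) <;> rfl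
      have hpd : (blk A w (y + w ⬝ᵥ A⁻¹.mulVec w)).PosDef :=
        blk_posDef_iff.2 ⟨hA, by simpa using hy⟩
      have hinv : (blk A w (y + w ⬝ᵥ A⁻¹.mulVec w))⁻¹.mulVec η (Sum.inr ()) = c / y := by
        conv_lhs => rw [hη]
        rw [blk_inv_mulVec hpd, add_sub_cancel_right]
        rfl
      rw [hinv, Phi_sum hW η ha hy hw (G := A⁻¹) (by rw [hAdef]), ← hc, ← ENNReal.ofReal_mul]
      · congr 1; ring
      · unfold Phi; positivity
    · rw [Set.indicator_of_notMem (fun h => hy (hiff.1 h)), 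
        Set.indicator_of_notMem (show y ∉ Set.Ioi (0 : ℝ) from hy)]
  · rw [Set.indicator_of_notMem ha]
    refine lintegral_eq_zero_of_ae_eq_zero (Eventually.of_forall fun α => ?_)
    refine Set.indicator_of_notMem (fun h => ha ?_) _
    have h : (schr W (Sum.elim a fun _ => α)).PosDef := h
    rw [schr_sum hW] at h
    exact (blk_posDef_iff.1 h).1

end step

section reindex

variable {V V' : Type*} [Fintype V] [DecidableEq V] [Fintype V'] [DecidableEq V']

lemma schr_submatrix (e : V ≃ V') (W : Matrix V' V' ℝ) (a : V' → ℝ) :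
    schr (W.submatrix e e) (a ∘ e) = (schr W a).submatrix e e := by
  ext i j
  simp [schr, Matrix.diagonal_apply]

lemma lintegral_Phi_reindex (e : V ≃ V') {W : Matrix V' V' ℝ} (hW : W.IsSymm) (η : V' → ℝ)
    {q : ℝ → ℝ} (v : V) :
    ∫⁻ a in pdSet (W.submatrix e e),
        ENNReal.ofReal (q ((schr (W.submatrix e e) a)⁻¹.mulVec (η ∘ e) v) *
          Phi (W.submatrix e e) (η ∘ e) a) =
      ∫⁻ a in pdSet W, ENNReal.ofReal (q ((schr W a)⁻¹.mulVec η (e v)) * Phi W η a) := by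
  have hS := measurableSet_pdSet hW
  have hS' := measurableSet_pdSet (hW.submatrix e)
  rw [← lintegral_indicator hS, ← lintegral_indicator hS']
  have hmp := (volume_measurePreserving_piCongrLeft (fun _ : V' => ℝ) e).symm
  rw [← hmp.lintegral_comp_emb (MeasurableEquiv.measurableEmbedding _)]
  refine lintegral_congr fun a => ?_
  have ha : (MeasurableEquiv.piCongrLeft (fun _ : V' => ℝ) e).symm a = a ∘ e := rfl
  rw [ha]
  have hmem : a ∘ e ∈ pdSet (W.submatrix e e) ↔ a ∈ pdSet W := by
    change (schr _ _).PosDef ↔ (schr _ _).PosDef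
    rw [schr_submatrix]
    refine ⟨fun h => ?_, fun h => h.submatrix e.injective⟩
    have := h.submatrix (e := e.symm) e.symm.injective
    simpa using this
  by_cases h : a ∈ pdSet W
  · rw [Set.indicator_of_mem h, Set.indicator_of_mem (hmem.2 h)]
    have e1 : ((schr W a).submatrix e e).mulVec (1 : V → ℝ) = (schr W a).mulVec 1 ∘ e := by
      rw [Matrix.submatrix_mulVec_equiv]; rfl
    have e2 : ((schr W a)⁻¹.submatrix e e).mulVec (η ∘ e) = (schr W a)⁻¹.mulVec η ∘ e := by
      rw [Matrix.submatrix_mulVec_equiv, Function.comp_assoc, Equiv.self_comp_symm]; rfl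
    have e3 : (1 : V → ℝ) = (1 : V' → ℝ) ∘ e := rfl
    simp only [Phi, schr_submatrix, Matrix.inv_submatrix_equiv, e1, e2,
      Matrix.det_submatrix_equiv_self, comp_equiv_dotProduct_comp_equiv, Function.comp_apply]
    rw [e3, comp_equiv_dotProduct_comp_equiv, Equiv.sum_comp e η]
  · rw [Set.indicator_of_notMem h, Set.indicator_of_notMem (fun h' => h (hmem.1 h'))]

/-- A finite type is a chosen vertex together with its complement. -/
lemma exists_equiv_sum_unit (v : V) :
    ∃ e : V ≃ {u : V // u ≠ v} ⊕ Unit, e v = Sum.inr () := by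
  refine ⟨(Equiv.optionSubtypeNe v).symm.trans (Equiv.optionEquivSumPUnit _), ?_⟩
  simp

end reindex

/-- The density `Phi` has total mass `(2π)^(|V|/2)`, independently of `W` and of the source `η`. -/
theorem lintegral_Phi {V : Type*} [Fintype V] [DecidableEq V] {W : Matrix V V ℝ} (hW : W.IsSymm)
    (hW0 : ∀ i j, 0 ≤ W i j) {η : V → ℝ} (hη : ∀ i, 0 ≤ η i) :
    ∫⁻ a in pdSet W, ENNReal.ofReal (Phi W η a) =
      ENNReal.ofReal (√(2 * π) ^ Fintype.card V) := by
  induction hn : Fintype.card V generalizing V with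
  | zero =>
    have := Fintype.card_eq_zero_iff.1 hn
    have hall : pdSet W = Set.univ := Set.eq_univ_of_forall fun a => by
      change (schr W a).PosDef
      refine Matrix.PosDef.of_dotProduct_mulVec_pos (Subsingleton.elim _ _) fun x hx => ?_
      exact absurd (Subsingleton.elim _ _) hx
    rw [hall, Measure.restrict_univ]
    rw [volume_pi, Measure.pi_of_empty]
    simp [Phi, dotProduct]
  | succ n ih =>
    obtain ⟨v⟩ : Nonempty V := Fintype.card_pos_iff.1 (by omega)
    obtain ⟨e, he⟩ := exists_equiv_sum_unit v
    have hW' : (W.submatrix e.symm e.symm).IsSymm := hW.submatrix _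
    have hWe : (W.submatrix e.symm e.symm).submatrix e e = W := by simp
    have hηe : (η ∘ e.symm) ∘ e = η := by ext; simp
    have h1 := lintegral_Phi_reindex e hW' (η ∘ e.symm) (q := fun _ => 1) v
    simp only [hWe, hηe, one_mul] at h1
    have h2 := lintegral_Phi_sum hW' (η ∘ e.symm) (q := fun _ => 1) measurable_const rfl
    simp only [one_mul] at h2
    rw [h1, h2]
    have hW1 : ∀ i j, 0 ≤ (W.submatrix e.symm e.symm).toBlocks₁₁ i j := fun i j => hW0 _ _
    have hcard : Fintype.card {u : V // u ≠ v} = n := by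
      have := Fintype.card_congr e
      simp only [Fintype.card_sum, Fintype.card_unit] at this
      omega
    have hη1 : ∀ i, 0 ≤ ((η ∘ e.symm) ∘ Sum.inl +
        fun u => (W.submatrix e.symm e.symm) (Sum.inl u) (Sum.inr ())) i := fun i =>
      add_nonneg (hη _) (hW0 _ _)
    have key := ih (isSymm_toBlocks hW') hW1 hη1 hcard
    rw [pow_succ, ENNReal.ofReal_mul (by positivity), ← key, ← lintegral_mul_const' _ _
      ENNReal.ofReal_ne_top]
    refine setLIntegral_congr_fun (measurableSet_pdSet (isSymm_toBlocks hW')) fun a ha => ?_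
    have hA : (schr (W.submatrix e.symm e.symm).toBlocks₁₁ a).PosDef := ha
    rw [lintegral_igDens]
    refine add_nonneg (hη _) (Finset.sum_nonneg fun u _ => mul_nonneg (hW0 _ _) ?_)
    refine schr_nonneg hW1 hA ?_ u
    intro i
    rw [posDef_mulVec_inv hA]
    exact hη _

/-- Tilting `Phi` by one coordinate of `H⁻¹ η` does not change its total mass: when the diagonal
entry at that vertex is integrated out, the tilt is the factor `c / y` in the one-dimensional
integral. -/
theorem lintegral_Phi_tilt {V : Type*} [Fintype V] [DecidableEq V] {W : Matrix V V ℝ}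
    (hW : W.IsSymm) (hW0 : ∀ i j, 0 ≤ W i j) {η : V → ℝ} (hη : ∀ i, 0 ≤ η i) (v : V)
    (hpos : ∀ a ∈ pdSet W, 0 < (schr W a)⁻¹.mulVec η v) :
    ∫⁻ a in pdSet W, ENNReal.ofReal ((schr W a)⁻¹.mulVec η v * Phi W η a) =
      ENNReal.ofReal (√(2 * π) ^ Fintype.card V) := by
  obtain ⟨e, he⟩ := exists_equiv_sum_unit v
  have hW' : (W.submatrix e.symm e.symm).IsSymm := hW.submatrix _
  have hWe : (W.submatrix e.symm e.symm).submatrix e e = W := by simp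
  have hηe : (η ∘ e.symm) ∘ e = η := by ext; simp
  have h1 := lintegral_Phi_reindex e hW' (η ∘ e.symm) (q := fun r => r) v
  simp only [hWe, hηe, he] at h1
  have h2 := lintegral_Phi_sum hW' (η ∘ e.symm) (q := fun r => r) measurable_id rfl
  rw [h1, h2]
  have hcard : Fintype.card V = Fintype.card {u : V // u ≠ v} + 1 := by
    have := Fintype.card_congr e
    simpa only [Fintype.card_sum, Fintype.card_unit] using this
  have hη1 : ∀ i, 0 ≤ ((η ∘ e.symm) ∘ Sum.inl +
      fun u => (W.submatrix e.symm e.symm) (Sum.inl u) (Sum.inr ())) i := fun i =>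
    add_nonneg (hη _) (hW0 _ _)
  have key := lintegral_Phi (isSymm_toBlocks hW') (fun i j => hW0 _ _) hη1
  rw [hcard, pow_succ, ENNReal.ofReal_mul (by positivity), ← key, ← lintegral_mul_const' _ _
    ENNReal.ofReal_ne_top]
  refine setLIntegral_congr_fun (measurableSet_pdSet (isSymm_toBlocks hW')) fun a ha => ?_
  have hA : (schr (W.submatrix e.symm e.symm).toBlocks₁₁ a).PosDef := ha
  rw [lintegral_igDens_tilt]
  -- positivity of `c` follows from positivity of `c / y` at the potential with `y = 1`
  set A := schr (W.submatrix e.symm e.symm).toBlocks₁₁ a with hAdef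
  set w : {u : V // u ≠ v} → ℝ :=
    fun u => (W.submatrix e.symm e.symm) (Sum.inl u) (Sum.inr ()) with hw
  set W' := W.submatrix e.symm e.symm with hW'def
  set a' : {u : V // u ≠ v} ⊕ Unit → ℝ :=
    Sum.elim a fun _ => 1 + W' (Sum.inr ()) (Sum.inr ()) + w ⬝ᵥ A⁻¹.mulVec w with ha'
  have hH : schr W' a' = blk A w (1 + w ⬝ᵥ A⁻¹.mulVec w) := by
    rw [ha', schr_sum hW']
    congr 1
    ring
  have hpd : (blk A w (1 + w ⬝ᵥ A⁻¹.mulVec w)).PosDef :=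
    blk_posDef_iff.2 ⟨hA, by simp⟩
  have hsub : schr W (a' ∘ e) = (schr W' a').submatrix e e := by
    rw [← schr_submatrix, hWe]
  have h3 := hpos (a' ∘ e) (by
    change (schr _ _).PosDef
    rw [hsub, hH]
    exact hpd.submatrix e.injective)
  rw [hsub, Matrix.inv_submatrix_equiv, Matrix.submatrix_mulVec_equiv, Function.comp_apply, he, hH]
    at h3
  have hη2 : η ∘ e.symm = Sum.elim ((η ∘ e.symm) ∘ Sum.inl) fun _ => (η ∘ e.symm) (Sum.inr ()) := by
    ext (i | i) <;> rfl
  rw [hη2, blk_inv_mulVec hpd, add_sub_cancel_right] at h3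
  simpa using h3

/-! ### The matrix-tree theorem -/

section matrixTree

variable {V : Type*} [Fintype V] [DecidableEq V]

/-- A parent map `f` whose iterates lead every vertex to the root `none`, as witnessed by a depth
function that decreases along `f`. -/
def Rooted (f : V → Option V) : Prop :=
  ∃ d : Option V → ℕ, ∀ i, d (f i) < d (some i)

/-- The rows of this matrix are `e_i - e_{f i}`, with `e_none = 0`. -/
def parentMat (f : V → Option V) : Matrix V V ℝ :=
  Matrix.of fun i j => (if i = j then 1 else 0) - (if f i = some j then 1 else 0)

/-- Ordering the vertices by depth makes the matrix unitriangular. -/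
lemma det_parentMat_of_rooted {f : V → Option V} (hf : Rooted f) : (parentMat f).det = 1 := by
  obtain ⟨d, hd⟩ := hf
  have htri : (parentMat f).BlockTriangular fun i => OrderDual.toDual (d (some i)) := by
    intro i j hij
    have hij : d (some i) < d (some j) := hij
    have h1 : i ≠ j := by rintro rfl; exact lt_irrefl _ hij
    have h2 : f i ≠ some j := fun h => by
      have := hd i
      rw [h] at this
      omega
    simp [parentMat, h1, h2]
  rw [htri.det]
  refine Finset.prod_eq_one fun a _ => ?_
  have : (parentMat f).toSquareBlock (fun i => OrderDual.toDual (d (some i))) a = 1 := by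
    ext ⟨i, hi⟩ ⟨j, hj⟩
    have h2 : f i ≠ some j := fun h => by
      have h3 := hd i
      rw [h] at h3
      have : d (some i) = d (some j) := OrderDual.toDual.injective (hi.trans hj.symm)
      omega
    simp [parentMat, Matrix.toSquareBlock, Matrix.toSquareBlockProp, h2, Matrix.one_apply]
  rw [this, Matrix.det_one]

/-- If some vertices never reach the root, their indicator vector lies in the kernel. -/
lemma det_parentMat_of_not_rooted {f : V → Option V} (hf : ¬ Rooted f) :
    (parentMat f).det = 0 := by
  set g : Option V → Option V := fun a => a.bind f with hg
  set S : Option V → Prop := fun a => ∀ n, g^[n] a ≠ none with hS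
  have hstep : ∀ i, S (some i) ↔ S (f i) := by
    intro i
    constructor
    · intro h n
      exact h (n + 1)
    · intro h n
      cases n with
      | zero => simp
      | succ n => exact h n
  have hnone : ¬ S none := fun h => h 0 rfl
  have hex : ∃ i, S (some i) := by
    by_contra! hno
    have hr : ∀ a, ∃ n, g^[n] a = none := by
      intro a
      by_contra! h
      cases a with
      | none => exact hnone h
      | some i => exact hno i h
    refine hf ⟨fun a => Nat.find (hr a), fun i => ?_⟩
    have h1 := Nat.find_spec (hr (some i))
    obtain ⟨n, hn⟩ : ∃ n, Nat.find (hr (some i)) = n + 1 := by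
      refine Nat.exists_eq_succ_of_ne_zero fun h => ?_
      rw [h] at h1
      simp at h1
    rw [hn] at h1
    change Nat.find (hr (f i)) < Nat.find (hr (some i))
    have : Nat.find (hr (f i)) ≤ n := Nat.find_min' _ h1
    omega
  obtain ⟨i₀, hi₀⟩ := hex
  refine Matrix.exists_mulVec_eq_zero_iff.1 ⟨fun i => if S (some i) then 1 else 0, ?_, ?_⟩
  · intro h
    simpa [hi₀] using congrFun h i₀
  · ext i
    have h1 : ∑ j, (if f i = some j then (1 : ℝ) else 0) * (if S (some j) then 1 else 0) =
        if S (f i) then 1 else 0 := by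
      cases hfi : f i with
      | none => simp [hnone]
      | some k => simp only [Option.some.injEq, ite_mul, one_mul, zero_mul]; simp
    simp only [Matrix.mulVec, dotProduct, parentMat, Matrix.of_apply, sub_mul,
      Finset.sum_sub_distrib, h1, Pi.zero_apply]
    simp only [ite_mul, one_mul, zero_mul]
    simp [hstep i]

/-- Expansion of a reduced Laplacian determinant along all rows. -/
lemma det_laplacian_eq_sum (w : V → Option V → ℝ) :
    (Matrix.of fun i j => (if i = j then ∑ b, w i b else 0) - w i (some j) : Matrix V V ℝ).det =
      ∑ f : V → Option V with Rooted f, ∏ i, w i (f i) := by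
  have hrow : (Matrix.of fun i j => (if i = j then ∑ b, w i b else 0) - w i (some j) :
      Matrix V V ℝ) = fun i => ∑ b, w i b • fun j =>
        ((if i = j then 1 else 0) - (if b = some j then 1 else 0) : ℝ) := by
    ext i j
    simp only [Matrix.of_apply, Finset.sum_apply, Pi.smul_apply, smul_eq_mul, mul_sub,
      Finset.sum_sub_distrib]
    congr 1
    · split_ifs <;> simp
    · simp
  rw [hrow]
  have h1 := (Matrix.detRowAlternating (n := V) (R := ℝ)).toMultilinearMap.map_sum
    (fun i b => w i b • fun j =>
        ((if i = j then 1 else 0) - (if b = some j then 1 else 0) : ℝ))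
  refine h1.trans ?_
  rw [Finset.sum_filter]
  refine Finset.sum_congr rfl fun f _ => ?_
  have h2 := (Matrix.detRowAlternating (n := V) (R := ℝ)).toMultilinearMap.map_smul_univ
    (fun i => w i (f i)) (fun i j =>
        ((if i = j then 1 else 0) - (if f i = some j then 1 else 0) : ℝ))
  refine h2.trans ?_
  change (∏ i, w i (f i)) • (parentMat f).det = _
  by_cases hf : Rooted f
  · rw [det_parentMat_of_rooted hf, if_pos hf, smul_eq_mul, mul_one]
  · rw [det_parentMat_of_not_rooted hf, if_neg hf, smul_zero]

/-- The edges joining each vertex to its parent. -/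
def parentEdges (f : V → Option V) : Finset (Sym2 (Option V)) :=
  Finset.univ.image fun i => s(some i, f i)

lemma parentEdge_injective {f : V → Option V} (hf : Rooted f) :
    Function.Injective fun i => s(some i, f i) := by
  obtain ⟨d, hd⟩ := hf
  intro i j hij
  rcases Sym2.eq_iff.1 hij with ⟨h, _⟩ | ⟨h1, h2⟩
  · exact Option.some_injective _ h
  · have h3 := hd i
    have h4 := hd j
    rw [← h1] at h4
    rw [h2] at h3
    omega

lemma card_parentEdges {f : V → Option V} (hf : Rooted f) :
    (parentEdges f).card = Fintype.card V := by
  rw [parentEdges, Finset.card_image_of_injective _ (parentEdge_injective hf), Finset.card_univ]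

lemma edgeSet_fromEdgeSet_of_subset {α : Type*} {G : SimpleGraph α} {T : Finset (Sym2 α)}
    (hT : (T : Set (Sym2 α)) ⊆ G.edgeSet) :
    (SimpleGraph.fromEdgeSet (T : Set (Sym2 α))).edgeSet = T := by
  rw [SimpleGraph.edgeSet_fromEdgeSet, sdiff_eq_left]
  rw [Set.disjoint_left]
  intro e he hd
  exact G.not_isDiag_of_mem_edgeSet (hT he) hd

lemma isSpanningTree_parentEdges {G : SimpleGraph (Option V)} {f : V → Option V} (hf : Rooted f)
    (hG : ∀ i, G.Adj (some i) (f i)) : IsSpanningTree G (parentEdges f) := by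
  have hsub : (parentEdges f : Set (Sym2 (Option V))) ⊆ G.edgeSet := by
    intro e he
    obtain ⟨i, _, rfl⟩ := Finset.mem_image.1 (Finset.mem_coe.1 he)
    exact hG i
  refine ⟨hsub, ?_⟩
  rw [SimpleGraph.isTree_iff_connected_and_card]
  constructor
  · obtain ⟨d, hd⟩ := hf
    have hreach : ∀ n a, d a ≤ n → (SimpleGraph.fromEdgeSet
        (parentEdges f : Set (Sym2 (Option V)))).Reachable a none := by
      intro n
      induction n with
      | zero =>
        intro a ha
        cases a with
        | none => exact SimpleGraph.Reachable.refl _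
        | some i => have := hd i; omega
      | succ n ih =>
        intro a ha
        cases a with
        | none => exact SimpleGraph.Reachable.refl _
        | some i =>
          have h1 := hd i
          refine SimpleGraph.Reachable.trans (SimpleGraph.Adj.reachable ?_) (ih (f i) (by omega))
          rw [SimpleGraph.fromEdgeSet_adj]
          exact ⟨Finset.mem_coe.2 (Finset.mem_image_of_mem _ (Finset.mem_univ i)), (hG i).ne⟩
    exact SimpleGraph.Connected.mk
      fun a b => (hreach _ a le_rfl).trans (hreach _ b le_rfl).symm
  · rw [edgeSet_fromEdgeSet_of_subset hsub]
    simp [card_parentEdges hf]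

/-- A rooted parent map is recovered from its edges by induction on the depth. -/
lemma parentEdges_injOn {f f' : V → Option V} (hf : Rooted f)
    (h : parentEdges f = parentEdges f') : f = f' := by
  obtain ⟨d, hd⟩ := hf
  have key : ∀ n i, d (some i) ≤ n → f i = f' i := by
    intro n
    induction n with
    | zero => intro i hi; have := hd i; omega
    | succ n ih =>
      intro i hi
      have hmem : s(some i, f i) ∈ parentEdges f' :=
        h ▸ Finset.mem_image_of_mem _ (Finset.mem_univ i)
      obtain ⟨j, _, hj⟩ := Finset.mem_image.1 hmem
      rcases Sym2.eq_iff.1 hj with ⟨h1, h2⟩ | ⟨h1, h2⟩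
      · rw [← h2, Option.some_injective _ h1]
      · have h3 := hd i
        rw [← h1] at h3
        have h4 := ih j (by omega)
        have h5 := hd j
        rw [h4, h2] at h5
        omega
  exact funext fun i => key _ i le_rfl

/-- In a spanning tree, the parent of a vertex is its neighbour closer to the root. -/
lemma exists_rooted_of_isSpanningTree {G : SimpleGraph (Option V)} {T : Finset (Sym2 (Option V))}
    (hT : IsSpanningTree G T) :
    ∃ f : V → Option V, Rooted f ∧ (∀ i, G.Adj (some i) (f i)) ∧ parentEdges f = T := by
  obtain ⟨hsub, htree⟩ := hT
  set F := SimpleGraph.fromEdgeSet (T : Set (Sym2 (Option V))) with hF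
  have hex : ∀ i, ∃ b, F.Adj (some i) b ∧ F.dist b none < F.dist (some i) none := by
    intro i
    obtain ⟨p, hp⟩ := htree.connected.exists_walk_length_eq_dist (some i) none
    cases p with
    | cons h q =>
      refine ⟨_, h, ?_⟩
      have := SimpleGraph.dist_le q
      rw [SimpleGraph.Walk.length_cons] at hp
      omega
  choose f hadj hdist using hex
  have hr : Rooted f := ⟨fun a => F.dist a none, hdist⟩
  have hmem : ∀ i, s(some i, f i) ∈ T := fun i => by
    have := hadj i
    rw [hF, SimpleGraph.fromEdgeSet_adj] at this
    exact Finset.mem_coe.1 this.1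
  refine ⟨f, hr, fun i => hsub (Finset.mem_coe.2 (hmem i)), ?_⟩
  refine Finset.eq_of_subset_of_card_le ?_ ?_
  · intro e he
    obtain ⟨i, _, rfl⟩ := Finset.mem_image.1 he
    exact hmem i
  · have h1 := (SimpleGraph.isTree_iff_connected_and_card.1 htree).2
    rw [hF, edgeSet_fromEdgeSet_of_subset hsub] at h1
    have h2 : T.card + 1 = Fintype.card V + 1 := by simpa using h1
    rw [card_parentEdges hr]
    omega

/-- The matrix-tree theorem: the sum of the weights of all spanning trees is the determinant of
the Laplacian reduced at the root. -/
theorem sum_STrees (G : SimpleGraph (Option V)) (c : Sym2 (Option V) → ℝ)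
    {w : V → Option V → ℝ}
    (hw : ∀ i b, w i b = if G.Adj (some i) b then c s(some i, b) else 0) :
    ∑ T ∈ STrees G, ∏ e ∈ T, c e =
      (Matrix.of fun i j => (if i = j then ∑ b, w i b else 0) - w i (some j) :
        Matrix V V ℝ).det := by
  rw [det_laplacian_eq_sum]
  have h1 : ∑ f : V → Option V with Rooted f, ∏ i, w i (f i) =
      ∑ f : V → Option V with (Rooted f ∧ ∀ i, G.Adj (some i) (f i)),
        ∏ i, c s(some i, f i) := by
    rw [Finset.sum_filter, Finset.sum_filter]
    refine Finset.sum_congr rfl fun f _ => ?_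
    by_cases hf : Rooted f
    · by_cases hG : ∀ i, G.Adj (some i) (f i)
      · rw [if_pos hf, if_pos ⟨hf, hG⟩]
        exact Finset.prod_congr rfl fun i _ => by rw [hw, if_pos (hG i)]
      · rw [if_pos hf, if_neg fun h => hG h.2]
        push Not at hG
        obtain ⟨i, hi⟩ := hG
        exact Finset.prod_eq_zero (Finset.mem_univ i) (by rw [hw, if_neg hi])
    · rw [if_neg hf, if_neg fun h => hf h.1]
  rw [h1]
  symm
  refine Finset.sum_bij (fun f _ => parentEdges f) ?_ ?_ ?_ ?_
  · intro f hf
    obtain ⟨hr, hG⟩ := (Finset.mem_filter.1 hf).2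
    exact Finset.mem_filter.2 ⟨Finset.mem_univ _, isSpanningTree_parentEdges hr hG⟩
  · intro f hf f' _ h
    exact parentEdges_injOn (Finset.mem_filter.1 hf).2.1 h
  · intro T hT
    obtain ⟨f, hr, hG, h⟩ := exists_rooted_of_isSpanningTree (Finset.mem_filter.1 hT).2
    exact ⟨f, Finset.mem_filter.2 ⟨Finset.mem_univ _, hr, hG⟩, h⟩
  · intro f hf
    rw [parentEdges, Finset.prod_image fun i _ j _ h =>
      parentEdge_injective (Finset.mem_filter.1 hf).2.1 h]

end matrixTree

/-! ### From the field `t` to the potential -/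

section field

variable {V : Type*} [Fintype V] [DecidableEq V]

/-- The potential `a(t)` for which `H e^t = η`. -/
noncomputable def pot (W : Matrix V V ℝ) (η t : V → ℝ) : V → ℝ := fun i =>
  (∑ j, W i j * Real.exp (t j) + η i) * Real.exp (-t i)

/-- The matrix `diag(e^t) H(a(t)) diag(e^t)`, that is the weighted Laplacian of the conductances
`W_ij e^(t_i + t_j)` plus the pinning `diag(η_i e^(t_i))`. -/
noncomputable def lapM (W : Matrix V V ℝ) (η t : V → ℝ) : Matrix V V ℝ :=
  Matrix.of fun i j =>
    (if i = j then (∑ k, W i k * Real.exp (t k) + η i) * Real.exp (t i) else 0) -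
      W i j * Real.exp (t i + t j)

lemma lapM_eq (W : Matrix V V ℝ) (η t : V → ℝ) :
    lapM W η t = Matrix.diagonal (fun i => Real.exp (t i)) * schr W (pot W η t) *
      Matrix.diagonal (fun i => Real.exp (t i)) := by
  ext i j
  rw [Matrix.mul_diagonal, Matrix.diagonal_mul]
  simp only [lapM, schr, pot, Matrix.of_apply, Matrix.sub_apply, Matrix.diagonal_apply,
    Real.exp_add, Real.exp_neg]
  split_ifs with h
  · subst h
    field_simp
  · ring

lemma schr_pot_eq (W : Matrix V V ℝ) (η t : V → ℝ) :
    schr W (pot W η t) = Matrix.diagonal (fun i => Real.exp (-t i)) * lapM W η t *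
      Matrix.diagonal (fun i => Real.exp (-t i)) := by
  ext i j
  rw [Matrix.mul_diagonal, Matrix.diagonal_mul]
  simp only [lapM, schr, pot, Matrix.of_apply, Matrix.sub_apply, Matrix.diagonal_apply,
    Real.exp_add, Real.exp_neg]
  split_ifs with h
  · subst h
    field_simp
  · field_simp
    ring

lemma lapM_quad {W : Matrix V V ℝ} (hW : W.IsSymm) (η t v : V → ℝ) :
    v ⬝ᵥ (lapM W η t).mulVec v =
      (1 / 2) * ∑ i, ∑ j, W i j * Real.exp (t i + t j) * (v i - v j) ^ 2 +
        ∑ i, η i * Real.exp (t i) * v i ^ 2 := by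
  have h1 : v ⬝ᵥ (lapM W η t).mulVec v =
      ∑ i, ∑ j, W i j * Real.exp (t i + t j) * (v i ^ 2 - v i * v j) +
        ∑ i, η i * Real.exp (t i) * v i ^ 2 := by
    rw [← Finset.sum_add_distrib, dotProduct]
    refine Finset.sum_congr rfl fun i _ => ?_
    have h : (lapM W η t).mulVec v i =
        (∑ k, W i k * Real.exp (t k) + η i) * Real.exp (t i) * v i -
          ∑ j, W i j * Real.exp (t i + t j) * v j := by
      simp only [Matrix.mulVec, dotProduct, lapM, Matrix.of_apply, sub_mul,
        Finset.sum_sub_distrib, ite_mul, zero_mul, Finset.sum_ite_eq, Finset.mem_univ, if_true]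
    have h' : ∑ j, W i j * Real.exp (t i + t j) * (v i ^ 2 - v i * v j) =
        (∑ k, W i k * Real.exp (t k)) * (Real.exp (t i) * v i ^ 2) -
          v i * ∑ j, W i j * Real.exp (t i + t j) * v j := by
      rw [Finset.sum_mul, Finset.mul_sum, ← Finset.sum_sub_distrib]
      refine Finset.sum_congr rfl fun j _ => ?_
      rw [Real.exp_add]
      ring
    rw [h, h']
    ring
  have h2 : ∑ i, ∑ j, W i j * Real.exp (t i + t j) * (v i ^ 2 - v i * v j) =
      ∑ i, ∑ j, W i j * Real.exp (t i + t j) * (v j ^ 2 - v i * v j) := by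
    rw [Finset.sum_comm]
    refine Finset.sum_congr rfl fun i _ => Finset.sum_congr rfl fun j _ => ?_
    rw [hW.apply, add_comm (t j), mul_comm (v j)]
  have h3 : ∑ i, ∑ j, W i j * Real.exp (t i + t j) * (v i - v j) ^ 2 =
      ∑ i, ∑ j, W i j * Real.exp (t i + t j) * (v i ^ 2 - v i * v j) +
        ∑ i, ∑ j, W i j * Real.exp (t i + t j) * (v j ^ 2 - v i * v j) := by
    simp only [← Finset.sum_add_distrib]
    refine Finset.sum_congr rfl fun i _ => Finset.sum_congr rfl fun j _ => ?_
    ring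
  rw [h1, h3, ← h2]
  ring

/-- The only vectors with vanishing energy are constant by connectedness, and the pinning at `x`
excludes nonzero constants. -/
lemma lapM_posDef {W : Matrix V V ℝ} (hW : W.IsSymm) (hW0 : ∀ i j, 0 ≤ W i j)
    {G : SimpleGraph V} (hG : G.Connected) (hGW : ∀ i j, G.Adj i j → 0 < W i j)
    {η : V → ℝ} (hη : ∀ i, 0 ≤ η i) {x : V} (hx : 0 < η x) (t : V → ℝ) :
    (lapM W η t).PosDef := by
  refine Matrix.PosDef.of_dotProduct_mulVec_pos ?_ fun v hv => ?_
  · rw [Matrix.IsHermitian, Matrix.conjTranspose_eq_transpose_of_trivial]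
    ext i j
    simp only [Matrix.transpose_apply, lapM, Matrix.of_apply, hW.apply i j, add_comm (t j)]
    by_cases h : i = j
    · subst h; rfl
    · rw [if_neg h, if_neg (Ne.symm h)]
  · have hn1 : ∀ i j, 0 ≤ W i j * Real.exp (t i + t j) * (v i - v j) ^ 2 := fun i j =>
      mul_nonneg (mul_nonneg (hW0 i j) (Real.exp_pos _).le) (sq_nonneg _)
    have hn2 : ∀ i, 0 ≤ η i * Real.exp (t i) * v i ^ 2 := fun i =>
      mul_nonneg (mul_nonneg (hη i) (Real.exp_pos _).le) (sq_nonneg _)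
    have hs1 : 0 ≤ ∑ i, ∑ j, W i j * Real.exp (t i + t j) * (v i - v j) ^ 2 :=
      Finset.sum_nonneg fun i _ => Finset.sum_nonneg fun j _ => hn1 i j
    have hs2 : 0 ≤ ∑ i, η i * Real.exp (t i) * v i ^ 2 := Finset.sum_nonneg fun i _ => hn2 i
    rw [star_trivial, lapM_quad hW]
    by_contra hcon
    have hz1 : ∑ i, ∑ j, W i j * Real.exp (t i + t j) * (v i - v j) ^ 2 = 0 := by linarith
    have hz2 : ∑ i, η i * Real.exp (t i) * v i ^ 2 = 0 := by linarith
    have hvx : v x = 0 := by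
      have := (Finset.sum_eq_zero_iff_of_nonneg fun i _ => hn2 i).1 hz2 x (Finset.mem_univ x)
      have hp : η x * Real.exp (t x) ≠ 0 := (mul_pos hx (Real.exp_pos _)).ne'
      simpa [hp] using this
    have hadj : ∀ i j, G.Adj i j → v i = v j := by
      intro i j hij
      have h1 := (Finset.sum_eq_zero_iff_of_nonneg fun i _ =>
        Finset.sum_nonneg fun j _ => hn1 i j).1 hz1 i (Finset.mem_univ i)
      have h2 := (Finset.sum_eq_zero_iff_of_nonneg fun j _ => hn1 i j).1 h1 j (Finset.mem_univ j)
      have hp : W i j * Real.exp (t i + t j) ≠ 0 := (mul_pos (hGW i j hij) (Real.exp_pos _)).ne'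
      rcases mul_eq_zero.1 h2 with h | h
      · exact absurd h hp
      · exact sub_eq_zero.1 (pow_eq_zero_iff two_ne_zero |>.1 h)
    refine hv (funext fun i => ?_)
    obtain ⟨p⟩ := hG.preconnected i x
    have : ∀ {i j : V}, G.Walk i j → v i = v j := by
      intro i j p
      induction p with
      | nil => rfl
      | cons h _ ih => exact (hadj _ _ h).trans ih
    rw [this p, hvx]
    rfl

lemma schr_pot_posDef {W : Matrix V V ℝ} (hW : W.IsSymm) (hW0 : ∀ i j, 0 ≤ W i j)
    {G : SimpleGraph V} (hG : G.Connected) (hGW : ∀ i j, G.Adj i j → 0 < W i j)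
    {η : V → ℝ} (hη : ∀ i, 0 ≤ η i) {x : V} (hx : 0 < η x) (t : V → ℝ) :
    (schr W (pot W η t)).PosDef := by
  have h := (lapM_posDef hW hW0 hG hGW hη hx t).conjTranspose_mul_mul_same
    (B := Matrix.diagonal fun i => Real.exp (-t i)) (by
      intro v v' h
      ext i
      have := congrFun h i
      simpa [Matrix.mulVec_diagonal] using this)
  rw [schr_pot_eq]
  simpa [Matrix.diagonal_conjTranspose] using h

lemma det_lapM (W : Matrix V V ℝ) (η t : V → ℝ) :
    (lapM W η t).det = (∏ i, Real.exp (t i)) ^ 2 * (schr W (pot W η t)).det := by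
  rw [lapM_eq, Matrix.det_mul, Matrix.det_mul, Matrix.det_diagonal]
  ring

lemma schr_pot_mulVec (W : Matrix V V ℝ) (η t : V → ℝ) :
    (schr W (pot W η t)).mulVec (fun i => Real.exp (t i)) = η := by
  ext i
  rw [schr_mulVec, pot, mul_assoc, ← Real.exp_add, neg_add_cancel, Real.exp_zero]
  ring

lemma schr_pot_inv {W : Matrix V V ℝ} {η t : V → ℝ} (h : (schr W (pot W η t)).PosDef) :
    (schr W (pot W η t))⁻¹.mulVec η = fun i => Real.exp (t i) := by
  have h1 := posDef_inv_mulVec h fun i => Real.exp (t i)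
  rwa [schr_pot_mulVec] at h1

/-- The `t`-dependent part of the Gibbs factor in terms of the potential. -/
lemma Phi_pot {W : Matrix V V ℝ} (hW : W.IsSymm) {η t : V → ℝ}
    (h : (schr W (pot W η t)).PosDef) :
    Phi W η (pot W η t) * √(schr W (pot W η t)).det =
      Real.exp (-((1 / 2) * ∑ i, ∑ j, W i j * (Real.cosh (t i - t j) - 1) +
        ∑ i, η i * (Real.cosh (t i) - 1))) := by
  rw [Phi, div_mul_cancel₀ _ (Real.sqrt_pos.2 h.det_pos).ne', schr_pot_inv h]
  congr 1
  have h1 : (1 : V → ℝ) ⬝ᵥ (schr W (pot W η t)).mulVec 1 =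
      ∑ i, ∑ j, W i j * (Real.exp (t j - t i) - 1) + ∑ i, η i * Real.exp (-t i) := by
    rw [← Finset.sum_add_distrib, dotProduct]
    refine Finset.sum_congr rfl fun i _ => ?_
    rw [schr_mulVec, pot]
    simp only [Pi.one_apply, one_mul, mul_one, add_mul, Finset.sum_mul, mul_sub,
      Finset.sum_sub_distrib, sub_eq_add_neg (t _), Real.exp_add]
    simp only [mul_assoc]
    ring
  have h2 : ∑ i, ∑ j, W i j * (Real.exp (t j - t i) - 1) =
      ∑ i, ∑ j, W i j * (Real.exp (t i - t j) - 1) := by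
    rw [Finset.sum_comm]
    refine Finset.sum_congr rfl fun i _ => Finset.sum_congr rfl fun j _ => ?_
    rw [hW.apply]
  have h3 : ∑ i, ∑ j, W i j * (Real.cosh (t i - t j) - 1) =
      (1 / 2) * (∑ i, ∑ j, W i j * (Real.exp (t j - t i) - 1) +
        ∑ i, ∑ j, W i j * (Real.exp (t i - t j) - 1)) := by
    simp only [← Finset.sum_add_distrib, Finset.mul_sum]
    refine Finset.sum_congr rfl fun i _ => Finset.sum_congr rfl fun j _ => ?_
    rw [Real.cosh_eq, neg_sub]
    ring
  have h4 : ∑ i, η i * (Real.cosh (t i) - 1) = (1 / 2) * ∑ i, η i * Real.exp (-t i) +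
      (1 / 2) * (η ⬝ᵥ fun i => Real.exp (t i)) - ∑ i, η i := by
    rw [dotProduct, Finset.mul_sum, Finset.mul_sum, ← Finset.sum_add_distrib,
      ← Finset.sum_sub_distrib]
    refine Finset.sum_congr rfl fun i _ => ?_
    rw [Real.cosh_eq]
    ring
  rw [h1, h3, ← h2, h4]
  ring

/-! ### The change of variables `t ↦ a(t)` -/

/-- The Jacobian matrix of the map `pot W η`. -/
noncomputable def potJac (W : Matrix V V ℝ) (η t : V → ℝ) : Matrix V V ℝ :=
  -(Matrix.diagonal (fun i => Real.exp (-t i)) * schr W (pot W η t) *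
    Matrix.diagonal (fun i => Real.exp (t i)))

lemma hasFDerivAt_pot (W : Matrix V V ℝ) (η t : V → ℝ) :
    HasFDerivAt (pot W η) (LinearMap.toContinuousLinearMap (Matrix.toLin' (potJac W η t))) t := by
  rw [hasFDerivAt_pi']
  intro i
  have hp : ∀ j, HasFDerivAt (fun t : V → ℝ => t j)
      (ContinuousLinearMap.proj (R := ℝ) (φ := fun _ : V => ℝ) j) t := fun j =>
    (ContinuousLinearMap.proj (R := ℝ) (φ := fun _ : V => ℝ) j).hasFDerivAt
  have h1 := (HasFDerivAt.fun_sum (u := Finset.univ) fun j _ =>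
    ((hp j).exp.const_mul (W i j))).add_const (η i)
  have h2 := h1.mul (hp i).neg.exp
  refine h2.congr_fderiv ?_
  ext v
  have he : Real.exp (-t i) * Real.exp (t i) = 1 := by rw [← Real.exp_add]; simp
  simp [potJac, Matrix.neg_mulVec, ← Matrix.mulVec_mulVec, Matrix.mulVec_diagonal, schr_mulVec,
    pot]
  linear_combination (∑ j, W i j * Real.exp (t j) + η i) * Real.exp (-t i) * v i * he

lemma det_potJac (W : Matrix V V ℝ) (η t : V → ℝ) :
    |(potJac W η t).det| = |(schr W (pot W η t)).det| := by
  rw [potJac, Matrix.det_neg, Matrix.det_mul, Matrix.det_mul, Matrix.det_diagonal,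
    Matrix.det_diagonal, mul_right_comm (∏ i, Real.exp (-t i)), ← Finset.prod_mul_distrib]
  simp [← Real.exp_add, abs_mul]

/-- The map `t ↦ a(t)` is a bijection onto `pdSet W` with inverse `a ↦ log (H⁻¹ η)` and Jacobian
`det H`, so the tilted mass of `Phi` can be computed in the variable `t`. -/
lemma lintegral_pot {W : Matrix V V ℝ} (hW : W.IsSymm) (hW0 : ∀ i j, 0 ≤ W i j)
    {G : SimpleGraph V} (hG : G.Connected) (hGW : ∀ i j, G.Adj i j → 0 < W i j)
    {η : V → ℝ} (hη : ∀ i, 0 ≤ η i) {x : V} (hx : 0 < η x) (y : V) :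
    ∫⁻ t, ENNReal.ofReal ((schr W (pot W η t)).det * (Real.exp (t y) * Phi W η (pot W η t))) =
      ENNReal.ofReal (√(2 * π) ^ Fintype.card V) := by
  have hpd := schr_pot_posDef hW hW0 hG hGW hη hx
  have himg : pot W η '' Set.univ = pdSet W := by
    ext a
    constructor
    · rintro ⟨t, _, rfl⟩
      exact hpd t
    · intro ha
      have hH : (schr W a).PosDef := ha
      set u := (schr W a)⁻¹.mulVec η with hu
      have hpos : ∀ i, 0 < u i := schr_pos hW0 hG hGW hH hη hx
      refine ⟨fun i => Real.log (u i), Set.mem_univ _, ?_⟩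
      ext i
      have h1 : (schr W a).mulVec u i = η i := by rw [hu, posDef_mulVec_inv hH]
      rw [schr_mulVec] at h1
      simp only [pot, Real.exp_neg, Real.exp_log (hpos _)]
      rw [← h1]
      have := (hpos i).ne'
      field_simp
      ring
  have hinj : Set.InjOn (pot W η) Set.univ := by
    intro t _ t' _ h
    have h1 := schr_pot_inv (hpd t)
    rw [h, schr_pot_inv (hpd t')] at h1
    ext i
    exact Real.exp_injective (congrFun h1 i).symm
  have key := lintegral_image_eq_lintegral_abs_det_fderiv_mul volume MeasurableSet.univ
    (fun t _ => (hasFDerivAt_pot W η t).hasFDerivWithinAt) hinj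
    (fun a => ENNReal.ofReal ((schr W a)⁻¹.mulVec η y * Phi W η a))
  rw [himg, lintegral_Phi_tilt hW hW0 hη y
    (fun a ha => schr_pos hW0 hG hGW (show (schr W a).PosDef from ha) hη hx y),
    Measure.restrict_univ] at key
  rw [key]
  refine lintegral_congr fun t => ?_
  rw [schr_pot_inv (hpd t), ContinuousLinearMap.det, LinearMap.coe_toContinuousLinearMap,
    LinearMap.det_toLin', det_potJac, abs_of_pos (hpd t).det_pos,
    ENNReal.ofReal_mul (hpd t).det_pos.le]

end field

/-! ### Reduction of the density to a Gaussian in `s` and a Schrödinger matrix -/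

section reduction

variable {V : Type*} [Fintype V] [DecidableEq V]

lemma aug_adj_some {G : SimpleGraph V} {i j : V} :
    (aug G).Adj (some i) (some j) ↔ G.Adj i j := by
  simp only [aug, SimpleGraph.fromRel_adj, ne_eq, Option.some.injEq]
  exact ⟨fun h => h.2.elim id fun h => h.symm, fun h => ⟨h.ne, Or.inl h⟩⟩

lemma aug_adj_none {G : SimpleGraph V} {i : V} : (aug G).Adj (some i) none := by
  simp [aug]

lemma bres_symm {β : V → V → ℝ} (hβ : ∀ i j, β i j = β j i) (η : V → ℝ) (a b : Option V) :
    bres β η a b = bres β η b a := by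
  cases a <;> cases b <;> simp [bres, hβ]

lemma Bfun_symm (t s : V → ℝ) (a b : Option V) : Bfun t s a b = Bfun t s b a := by
  rw [Bfun, Bfun, ← Real.cosh_neg, neg_sub, add_comm (extV t a)]
  ring

lemma treeW_mk {β : V → V → ℝ} (hβ : ∀ i j, β i j = β j i) (η t : V → ℝ) (a b : Option V) :
    treeW β η t s(a, b) = bres β η a b * Real.exp (extV t a + extV t b) := by
  simp only [treeW, esym, Sym2.lift_mk]
  rw [bres_symm hβ η b a, add_comm (extV t b)]
  ring

lemma gibbs_mk {β : V → V → ℝ} (hβ : ∀ i j, β i j = β j i) (η t s : V → ℝ) (a b : Option V) :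
    gibbs β η t s s(a, b) = Real.exp (-(bres β η a b * (Bfun t s a b - 1))) := by
  simp only [gibbs, esym, Sym2.lift_mk]
  rw [bres_symm hβ η b a, Bfun_symm t s b a]
  ring

/-- The edge weights `β`, extended by zero to non-adjacent pairs. -/
noncomputable def wt (G : SimpleGraph V) (β : V → V → ℝ) : Matrix V V ℝ :=
  Matrix.of fun i j => if G.Adj i j then β i j else 0

lemma wt_isSymm (G : SimpleGraph V) {β : V → V → ℝ} (hβ : ∀ i j, β i j = β j i) :
    (wt G β).IsSymm := by
  ext i j
  simp only [wt, Matrix.transpose_apply, Matrix.of_apply, G.adj_comm j i, hβ j i]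

lemma sum_STrees_treeW (G : SimpleGraph V) {β : V → V → ℝ} (hβ : ∀ i j, β i j = β j i)
    (η t : V → ℝ) :
    ∑ T ∈ STrees (aug G), ∏ e ∈ T, treeW β η t e = (lapM (wt G β) η t).det := by
  rw [sum_STrees (aug G) (treeW β η t)
    (w := fun i b => if (aug G).Adj (some i) b then treeW β η t s(some i, b) else 0)
    fun _ _ => rfl]
  congr 1
  have h1 : ∀ i j, (if (aug G).Adj (some i) (some j) then treeW β η t s(some i, some j) else 0) =
      wt G β i j * Real.exp (t i + t j) := fun i j => by
    rw [treeW_mk hβ]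
    by_cases h : G.Adj i j
    · rw [if_pos (aug_adj_some.2 h)]
      simp [wt, h, bres, extV]
    · rw [if_neg (fun h' => h (aug_adj_some.1 h'))]
      simp [wt, h]
  ext i j
  simp only [Matrix.of_apply, lapM, h1, Fintype.sum_option, if_pos (aug_adj_none (G := G))]
  congr 1
  split_ifs
  · rw [treeW_mk hβ]
    simp only [bres, extV, Option.elim, add_zero, add_mul, Finset.sum_mul, Real.exp_add]
    rw [add_comm]
    congr 1
    exact Finset.sum_congr rfl fun k _ => by ring
  · rfl

/-- Each edge arises from exactly two ordered pairs. -/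
lemma sum_adj_eq {α : Type*} [Fintype α] [DecidableEq α] (G : SimpleGraph α) (c : Sym2 α → ℝ) :
    ∑ a, ∑ b, (if G.Adj a b then c s(a, b) else 0) =
      2 * ∑ e ∈ Finset.univ.filter (fun e : Sym2 α => e ∈ G.edgeSet), c e := by
  rw [← Fintype.sum_prod_type', ← Finset.sum_filter,
    ← Finset.sum_fiberwise_of_maps_to (t := Finset.univ.filter fun e : Sym2 α => e ∈ G.edgeSet)
      (g := fun p : α × α => s(p.1, p.2)) (fun p hp => by simpa using hp), Finset.mul_sum]
  refine Finset.sum_congr rfl fun e he => ?_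
  induction e with
  | _ a b =>
    have hab : G.Adj a b := by simpa using he
    have : (Finset.univ.filter fun p : α × α => G.Adj p.1 p.2).filter
        (fun p => s(p.1, p.2) = s(a, b)) = {(a, b), (b, a)} := by
      ext ⟨u, v⟩
      simp only [Finset.mem_filter, Finset.mem_univ, true_and, Sym2.eq_iff, Finset.mem_insert,
        Finset.mem_singleton, Prod.mk.injEq]
      constructor
      · exact fun h => h.2
      · rintro (⟨rfl, rfl⟩ | ⟨rfl, rfl⟩)
        · exact ⟨hab, Or.inl ⟨rfl, rfl⟩⟩
        · exact ⟨hab.symm, Or.inr ⟨rfl, rfl⟩⟩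
    rw [this, Finset.sum_pair fun h => hab.ne (Prod.mk.inj h).1]
    rw [Sym2.eq_swap (a := b)]
    ring

/-- The Gibbs factor splits into a function of `t` and a centred Gaussian in `s`. -/
lemma prod_gibbs (G : SimpleGraph V) {β : V → V → ℝ} (hβ : ∀ i j, β i j = β j i)
    (η t s : V → ℝ) :
    ∏ e ∈ Finset.univ.filter (fun e : Sym2 (Option V) => e ∈ (aug G).edgeSet),
        gibbs β η t s e =
      Real.exp (-((1 / 2) * ∑ i, ∑ j, wt G β i j * (Real.cosh (t i - t j) - 1) +
        ∑ i, η i * (Real.cosh (t i) - 1))) *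
      Real.exp (-(s ⬝ᵥ (lapM (wt G β) η t).mulVec s) / 2) := by
  set c : Sym2 (Option V) → ℝ := esym fun a b => bres β η a b * (Bfun t s a b - 1) with hc
  have hcmk : ∀ a b, c s(a, b) = bres β η a b * (Bfun t s a b - 1) := fun a b => by
    simp only [hc, esym, Sym2.lift_mk]
    rw [bres_symm hβ η b a, Bfun_symm t s b a]
    ring
  have hg : ∀ e, gibbs β η t s e = Real.exp (-c e) := by
    intro e
    induction e with
    | _ a b => rw [gibbs_mk hβ, hcmk]
  rw [Finset.prod_congr rfl fun e _ => hg e, ← Real.exp_sum, ← Real.exp_add]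
  congr 1
  have h1 := sum_adj_eq (aug G) c
  have h2 : ∑ a, ∑ b, (if (aug G).Adj a b then c s(a, b) else 0) =
      ∑ i, ∑ j, wt G β i j * (Bfun t s (some i) (some j) - 1) +
        2 * ∑ i, η i * (Bfun t s (some i) none - 1) := by
    have hss : ∀ i j, (if (aug G).Adj (some i) (some j) then c s(some i, some j) else 0) =
        wt G β i j * (Bfun t s (some i) (some j) - 1) := fun i j => by
      rw [hcmk]
      by_cases h : G.Adj i j
      · rw [if_pos (aug_adj_some.2 h)]
        simp [wt, h, bres]
      · rw [if_neg (fun h' => h (aug_adj_some.1 h'))]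
        simp [wt, h]
    have hsn : ∀ i, (if (aug G).Adj (some i) none then c s(some i, none) else 0) =
        η i * (Bfun t s (some i) none - 1) := fun i => by
      rw [if_pos aug_adj_none, hcmk]
      rfl
    have hns : ∀ i, (if (aug G).Adj none (some i) then c s(none, some i) else 0) =
        η i * (Bfun t s (some i) none - 1) := fun i => by
      rw [SimpleGraph.adj_comm, Sym2.eq_swap, hsn]
    simp only [Fintype.sum_option, hss, hsn, hns, SimpleGraph.irrefl, if_false,
      Finset.sum_add_distrib]
    ring
  have h3 : ∑ i, ∑ j, wt G β i j * (Bfun t s (some i) (some j) - 1) =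
      ∑ i, ∑ j, wt G β i j * (Real.cosh (t i - t j) - 1) +
        (1 / 2) * ∑ i, ∑ j, wt G β i j * Real.exp (t i + t j) * (s i - s j) ^ 2 := by
    simp only [Finset.mul_sum, ← Finset.sum_add_distrib]
    refine Finset.sum_congr rfl fun i _ => Finset.sum_congr rfl fun j _ => ?_
    simp only [Bfun, extV, Option.elim]
    ring
  have h4 : ∑ i, η i * (Bfun t s (some i) none - 1) =
      ∑ i, η i * (Real.cosh (t i) - 1) + (1 / 2) * ∑ i, η i * Real.exp (t i) * s i ^ 2 := by
    simp only [Finset.mul_sum, ← Finset.sum_add_distrib]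
    refine Finset.sum_congr rfl fun i _ => ?_
    simp only [Bfun, extV, Option.elim, sub_zero, add_zero]
    ring
  rw [Finset.sum_neg_distrib, lapM_quad (wt_isSymm G hβ)]
  rw [h2, h3, h4] at h1
  linarith

lemma continuous_extV (a : Option V) : Continuous fun t : V → ℝ => extV t a := by
  cases a with
  | none => exact continuous_const
  | some i => exact continuous_apply i

lemma continuous_dens (G : SimpleGraph V) {β : V → V → ℝ} (hβ : ∀ i j, β i j = β j i)
    (η : V → ℝ) (T : Finset (Sym2 (Option V))) :
    Continuous fun p : (V → ℝ) × (V → ℝ) => dens G β η p.1 p.2 T := by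
  have h1 : ∀ a, Continuous fun p : (V → ℝ) × (V → ℝ) => extV p.1 a := fun a =>
    (continuous_extV a).comp continuous_fst
  have h2 : ∀ a, Continuous fun p : (V → ℝ) × (V → ℝ) => extV p.2 a := fun a =>
    (continuous_extV a).comp continuous_snd
  unfold dens
  refine ((continuous_finsetProd _ fun j _ => ?_).mul
    (continuous_finsetProd _ fun e _ => ?_)).mul (continuous_finsetProd _ fun e _ => ?_)
  · fun_prop
  · induction e with
    | _ a b =>
      simp only [gibbs_mk hβ, Bfun]
      exact Real.continuous_exp.comp ((continuous_const.mul
        (((Real.continuous_cosh.comp ((h1 a).sub (h1 b))).add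
          ((continuous_const.mul (((h2 a).sub (h2 b)).pow 2)).mul
            (Real.continuous_exp.comp ((h1 a).add (h1 b))))).sub continuous_const)).neg)
  · induction e with
    | _ a b =>
      simp only [treeW_mk hβ]
      exact continuous_const.mul (Real.continuous_exp.comp ((h1 a).add (h1 b)))

lemma bres_nonneg {G : SimpleGraph V} {β : V → V → ℝ} (hβpos : ∀ i j, G.Adj i j → 0 < β i j)
    {η : V → ℝ} (hη : ∀ i, 0 ≤ η i) {a b : Option V} (h : (aug G).Adj a b) :
    0 ≤ bres β η a b := by
  cases a with
  | none => cases b with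
    | none => exact le_rfl
    | some j => exact hη j
  | some i => cases b with
    | none => exact hη i
    | some j => exact (hβpos i j (aug_adj_some.1 h)).le

lemma dens_nonneg {G : SimpleGraph V} {β : V → V → ℝ} (hβ : ∀ i j, β i j = β j i)
    (hβpos : ∀ i j, G.Adj i j → 0 < β i j) {η : V → ℝ} (hη : ∀ i, 0 ≤ η i) (t s : V → ℝ)
    {T : Finset (Sym2 (Option V))} (hT : T ∈ STrees (aug G)) : 0 ≤ dens G β η t s T := by
  refine mul_nonneg (mul_nonneg (by positivity) (Finset.prod_nonneg fun e _ => ?_))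
    (Finset.prod_nonneg fun e he => ?_)
  · induction e with
    | _ a b => rw [gibbs_mk hβ]; positivity
  · have hmem : e ∈ (aug G).edgeSet := (Finset.mem_filter.1 hT).2.1 (Finset.mem_coe.2 he)
    induction e with
    | _ a b =>
      rw [treeW_mk hβ]
      exact mul_nonneg (bres_nonneg hβpos hη hmem) (Real.exp_pos _).le

/-- Summing over trees by the matrix-tree theorem, integrating out the Gaussian `s`, and changing
variables from `t` to the potential shows that `e^(t_y)` has expectation one. -/
lemma lintegral_dens {G : SimpleGraph V} (hG : G.Connected) {β : V → V → ℝ}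
    (hβ : ∀ i j, β i j = β j i) (hβpos : ∀ i j, G.Adj i j → 0 < β i j) {η : V → ℝ}
    (hη : ∀ i, 0 ≤ η i) {x : V} (hx : 0 < η x) (y : V) :
    ∑ T ∈ STrees (aug G), ∫⁻ p : (V → ℝ) × (V → ℝ),
      ENNReal.ofReal (dens G β η p.1 p.2 T * Real.exp (p.1 y)) = 1 := by
  have hcont : ∀ T, Continuous fun p : (V → ℝ) × (V → ℝ) =>
      dens G β η p.1 p.2 T * Real.exp (p.1 y) := fun T =>
    (continuous_dens G hβ η T).mul (by fun_prop)
  have hW0 : ∀ i j, 0 ≤ wt G β i j := fun i j => by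
    simp only [wt, Matrix.of_apply]
    split_ifs with h
    · exact (hβpos i j h).le
    · exact le_rfl
  have hGW : ∀ i j, G.Adj i j → 0 < wt G β i j := fun i j h => by
    simpa [wt, h] using hβpos i j h
  have hWs := wt_isSymm G hβ
  rw [← lintegral_finsetSum _ fun T _ => (hcont T).measurable.ennreal_ofReal]
  set C : ℝ := √(2 * π) ^ Fintype.card V with hCdef
  have hC : 0 < C := by positivity
  have hCC : (2 * π) ^ Fintype.card V = C * C := by
    rw [hCdef, ← mul_pow, Real.mul_self_sqrt (by positivity)]
  have hpd := schr_pot_posDef hWs hW0 hG hGW hη hx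
  have hMpd := lapM_posDef hWs hW0 hG hGW hη hx
  -- the integrand after summation over trees
  have hsum : ∀ p : (V → ℝ) × (V → ℝ), ∑ T ∈ STrees (aug G),
      ENNReal.ofReal (dens G β η p.1 p.2 T * Real.exp (p.1 y)) =
      ENNReal.ofReal ((∏ j, Real.exp (-p.1 j) / (2 * π)) *
        (Phi (wt G β) η (pot (wt G β) η p.1) * √(schr (wt G β) (pot (wt G β) η p.1)).det) *
        (lapM (wt G β) η p.1).det * Real.exp (p.1 y)) *
      ENNReal.ofReal (Real.exp (-(p.2 ⬝ᵥ (lapM (wt G β) η p.1).mulVec p.2) / 2)) := by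
    rintro ⟨t, s⟩
    rw [← ENNReal.ofReal_sum_of_nonneg fun T hT =>
      mul_nonneg (dens_nonneg hβ hβpos hη t s hT) (Real.exp_pos _).le,
      ← ENNReal.ofReal_mul' (Real.exp_pos _).le, ← sum_STrees_treeW G hβ, Phi_pot hWs (hpd t)]
    congr 1
    simp only [dens, prod_gibbs G hβ, Finset.mul_sum, Finset.sum_mul]
    exact Finset.sum_congr rfl fun T _ => by ring
  have hmeas : Measurable fun p : (V → ℝ) × (V → ℝ) => ∑ T ∈ STrees (aug G),
      ENNReal.ofReal (dens G β η p.1 p.2 T * Real.exp (p.1 y)) :=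
    Finset.measurable_sum _ fun T _ => (hcont T).measurable.ennreal_ofReal
  rw [Measure.volume_eq_prod, lintegral_prod _ hmeas.aemeasurable]
  have hs : ∀ t : V → ℝ, ∫⁻ s : V → ℝ,
      ENNReal.ofReal ((∏ j, Real.exp (-t j) / (2 * π)) *
        (Phi (wt G β) η (pot (wt G β) η t) * √(schr (wt G β) (pot (wt G β) η t)).det) *
        (lapM (wt G β) η t).det * Real.exp (t y)) *
      ENNReal.ofReal (Real.exp (-(s ⬝ᵥ (lapM (wt G β) η t).mulVec s) / 2)) =
      ENNReal.ofReal C⁻¹ * ENNReal.ofReal ((schr (wt G β) (pot (wt G β) η t)).det *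
        (Real.exp (t y) * Phi (wt G β) η (pot (wt G β) η t))) := by
    intro t
    have hd := (hpd t).det_pos
    have hP : 0 ≤ Phi (wt G β) η (pot (wt G β) η t) := by unfold Phi; positivity
    rw [lintegral_const_mul' _ _ ENNReal.ofReal_ne_top, lintegral_gauss_posDef (hMpd t),
      ← ENNReal.ofReal_mul' (by positivity), ← ENNReal.ofReal_mul (by positivity)]
    congr 1
    have hE : 0 < ∏ i, Real.exp (t i) := Finset.prod_pos fun i _ => Real.exp_pos _
    have hpi : ∏ j, Real.exp (-t j) / (2 * π) = (∏ i, Real.exp (t i))⁻¹ / (C * C) := by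
      rw [Finset.prod_div_distrib, Finset.prod_const, Finset.card_univ, hCC]
      simp only [Real.exp_neg, Finset.prod_inv_distrib]
    rw [hpi, det_lapM, Real.sqrt_mul (sq_nonneg _), Real.sqrt_sq hE.le, ← hCdef]
    have h1 : √(schr (wt G β) (pot (wt G β) η t)).det ≠ 0 := (Real.sqrt_pos.2 hd).ne'
    have h2 := hE.ne'
    have h3 := hC.ne'
    field_simp
  refine (lintegral_congr fun t =>
    (lintegral_congr fun s => hsum (t, s)).trans (hs t)).trans ?_
  rw [lintegral_const_mul' _ _ ENNReal.ofReal_ne_top, lintegral_pot hWs hW0 hG hGW hη hx y,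
    ← ENNReal.ofReal_mul (by positivity), ← hCdef, inv_mul_cancel₀ hC.ne', ENNReal.ofReal_one]

/-! ### The observable on trees with a single root -/

lemma singlePin_nonneg {c : ℝ} (hc : 0 < c) (x i : V) : 0 ≤ singlePin x c i := by
  unfold singlePin
  split_ifs
  · exact hc.le
  · exact le_rfl

/-- The pinning vanishes away from `x`, hence so does the weight of every other root edge. -/
lemma dens_eq_zero {G : SimpleGraph V} {β : V → V → ℝ} (hβ : ∀ i j, β i j = β j i)
    {x : V} {c : ℝ} (t s : V → ℝ) {T : Finset (Sym2 (Option V))} {z : V} (hz : z ≠ x)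
    (hzT : rootEdge z ∈ T) : dens G β (singlePin x c) t s T = 0 := by
  unfold dens
  rw [Finset.prod_eq_zero hzT, mul_zero]
  rw [rootEdge, treeW_mk hβ]
  simp [bres, singlePin, hz]

/-- If `x` is the only neighbour of the root in the spanning tree `T`, then every vertex is joined
to `x` inside the forest obtained by deleting the root. -/
lemma root_connIn {G : SimpleGraph (Option V)} {T : Finset (Sym2 (Option V))}
    (hT : T ∈ STrees G) {x : V} (hx : ∀ z, rootEdge z ∈ T → z = x) (y : V) :
    rootEdge x ∈ T ∧ connIn T x y := by
  have htree := (Finset.mem_filter.1 hT).2.2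
  have key : ∀ {a b : Option V},
      (SimpleGraph.fromEdgeSet (T : Set (Sym2 (Option V)))).Walk a b → b = none →
        ∀ z, a = some z → rootEdge x ∈ T ∧ connIn T z x := by
    intro a b p
    induction p with
    | nil => intro h z hz; simp [h] at hz
    | @cons u v w h p ih =>
      rintro hw z rfl
      rw [SimpleGraph.fromEdgeSet_adj] at h
      have hmem : s(some z, v) ∈ T := Finset.mem_coe.1 h.1
      cases v with
      | none =>
        obtain rfl := hx z hmem
        exact ⟨hmem, SimpleGraph.Reachable.refl _⟩
      | some v =>
        obtain ⟨h1, h2⟩ := ih hw v rfl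
        refine ⟨h1, SimpleGraph.Reachable.trans (SimpleGraph.Adj.reachable ?_) h2⟩
        rw [SimpleGraph.fromEdgeSet_adj]
        exact ⟨Finset.mem_coe.2 (Finset.mem_filter.2 ⟨hmem, by simp⟩), h.2⟩
  obtain ⟨p⟩ := htree.connected.preconnected (some y) none
  obtain ⟨h1, h2⟩ := key p rfl y rfl
  exact ⟨h1, h2.symm⟩

/-- A tree with a root other than `x` has density zero; on the remaining trees the observable is
`e^(t_y) / π_x`. -/
lemma dens_obs {G : SimpleGraph V} {β : V → V → ℝ} (hβ : ∀ i j, β i j = β j i) {x y : V}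
    (hxy : x ≠ y) {c : ℝ} (πx : ℝ) (t s : V → ℝ)
    {T : Finset (Sym2 (Option V))} (hT : T ∈ STrees (aug G)) :
    dens G β (singlePin x c) t s T = 0 ∨
      obs (singlePin x πx) x y t T = Real.exp (t y) / πx := by
  by_cases h : ∀ z, rootEdge z ∈ T → z = x
  · right
    rw [obs, if_pos (root_connIn hT h y)]
    simp only [singlePin, if_true, if_neg hxy.symm, zero_mul, add_zero, mul_one, Real.exp_add]
    rw [mul_comm πx, mul_div_mul_left _ _ (Real.exp_pos _).ne']
  · left
    push Not at h
    obtain ⟨z, hz, hzx⟩ := h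
    exact dens_eq_zero hβ t s hzx hz

end reduction

end H22

namespace H22

/-- under the single-pinning measure `μ^{ε_xδ_x}` with `ε_x > 0` and
the degenerate weight vector `π_xδ_x` (value `π_x > 0` at `x`, zero elsewhere), the
observable `O^{π_xδ_x}_{xy}` equals `e^{t_y}/π_x` almost surely — expressed here by
`E[|O^{π_xδ_x}_{xy} − e^{t_y}/π_x|] = 0` — and `E_{μ^{ε_xδ_x}}[O^{π_xδ_x}_{xy}] = 1/π_x`. -/
theorem stmt_15 {V : Type*} [Fintype V] [DecidableEq V]
    (G : SimpleGraph V) (hG : G.Connected)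
    (β : V → V → ℝ) (hβsymm : ∀ i j, β i j = β j i)
    (hβpos : ∀ i j, G.Adj i j → 0 < β i j)
    (x y : V) (hxy : x ≠ y) (εx : ℝ) (hεx : 0 < εx) (πx : ℝ) (hπx : 0 < πx) :
    expect G β (singlePin x εx)
        (fun t _ T => |obs (singlePin x πx) x y t T - Real.exp (t y) / πx|) = 0 ∧
    expect G β (singlePin x εx)
        (fun t _ T => obs (singlePin x πx) x y t T) = πx⁻¹ := by
  constructor
  · refine Finset.sum_eq_zero fun T hT => ?_
    refine integral_eq_zero_of_ae (Eventually.of_forall fun p => ?_)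
    rcases dens_obs hβsymm hxy (c := εx) πx p.1 p.2 hT with h | h
    · simp [h]
    · simp [h]
  · have hη : ∀ i, 0 ≤ singlePin x εx i := singlePin_nonneg hεx x
    have hx : 0 < singlePin x εx x := by simpa [singlePin] using hεx
    have hone := lintegral_dens hG hβsymm hβpos hη hx y
    have h1 : ∀ T ∈ STrees (aug G), ∫ p : (V → ℝ) × (V → ℝ),
        dens G β (singlePin x εx) p.1 p.2 T * obs (singlePin x πx) x y p.1 T =
        (∫⁻ p : (V → ℝ) × (V → ℝ), ENNReal.ofReal
          (dens G β (singlePin x εx) p.1 p.2 T * Real.exp (p.1 y))).toReal * πx⁻¹ := by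
      intro T hT
      have hc : Continuous fun p : (V → ℝ) × (V → ℝ) =>
          dens G β (singlePin x εx) p.1 p.2 T * Real.exp (p.1 y) :=
        (continuous_dens G hβsymm _ T).mul (by fun_prop)
      have h0 : ∀ p : (V → ℝ) × (V → ℝ),
          0 ≤ dens G β (singlePin x εx) p.1 p.2 T * Real.exp (p.1 y) := fun p =>
        mul_nonneg (dens_nonneg hβsymm hβpos hη p.1 p.2 hT) (Real.exp_pos _).le
      have h2 := integral_eq_lintegral_of_nonneg_ae (μ := volume) (Eventually.of_forall h0)
        hc.aestronglyMeasurable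
      rw [← h2, ← integral_mul_const]
      refine integral_congr_ae (Eventually.of_forall fun p => ?_)
      rcases dens_obs hβsymm hxy (c := εx) πx p.1 p.2 hT with h | h
      · simp [h]
      · simp only [h, div_eq_mul_inv, mul_assoc]
    rw [expect, Finset.sum_congr rfl h1, ← Finset.sum_mul, ← ENNReal.toReal_sum, hone]
    · simp
    · exact ENNReal.sum_ne_top.1 (by rw [hone]; exact ENNReal.one_ne_top)

end H22
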